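/- arXiv:2504.14048 — 3 statements merged into one kernel-verified Lean document; each statement's English description precedes it below -/
import Mathlib

section
/- Let Ω be a lattice in ℂ with Weierstrass functions ℘, ζ and invariants g₂, g₃. Let p ∈ ℂ ∖ Ω and let m ≥ 1 be an integer. Then the two complex numbers ℘(p/m) and ζ(p/m) − ζ(p)/m are algebraic over the field ℚ(g₂, g₃, ℘(p)). -/
/-!
For generic `z`, the numbers `℘(n z)` and `ζ(n z) - n ζ(z)` are algebraic over `ℚ(g₂, g₃, ℘(z))`: the
addition and duplication formulas express them by field operations in `g₂`, `℘(z)`, `℘'(z)`,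
`℘(k z)` and `℘'(k z)` with `k < n`, and `℘'² = 4 ℘³ - g₂ ℘ - g₃` makes `℘'` algebraic over `℘`
(`Good.mem_subfield`). Here `z` is generic when it lies off the countable set on which some
denominator vanishes or some positive multiple of `z` is a lattice point.

The point `p / m` may be one of the exceptional points, so the relations have to be specialised
(`isAlgebraic_of_generic`). Let `f` and `g` be analytic off a countable set, and let `k` be a
countable field such that at every generic `z` some nonzero polynomial over `k` annihilates
`(g z, f z)`. There are countably many polynomials, and an analytic function that is not
identically zero has countably many zeros, so one polynomial annihilates `(g z, f z)` for all `z`.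
After division by a power of `Y - a` it does not vanish on the line `Y = a`, and hence it shows that
`g z₀` is algebraic over `k` whenever `f z₀ = a ∈ k`. This is used twice at `z₀ = p / m`: with
`f = ℘(m z)` and `g = ℘(z)` over `K = ℚ(g₂, g₃, ℘(p))`, and then with `f = ℘(z)` and
`g = ζ(m z) - m ζ(z)` over the algebraic closure of `K`.

The addition theorem `ζ(u + v) = ζ(u) + ζ(v) + (℘'(u) - ℘'(v)) / (2 (℘(u) - ℘(v)))` is `zeta_add`:
with `u + v` fixed, the difference of the two sides has derivative zero in `u`, by the differential
equations of `℘`, on a set with countable complement, which is connected; and it tends to `0` as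
`u → 0`. The formula for `℘` follows by differentiation, the duplication formulas by taking limits.

The sigma product is differentiated logarithmically to identify `wZeta` and `wP` with the lattice
sums `zeta` and `PeriodPair.weierstrassP` away from the lattice (`wZeta_eq`, `wP_eq`); the
differential equation for `℘` is then the one known for period pairs.
-/

open Complex

noncomputable section

/-- The lattice `ℤω₁ + ℤω₂`, as a set of complex numbers. -/
def LatticePts (ω₁ ω₂ : ℂ) : Set ℂ := {z | ∃ m n : ℤ, z = m * ω₁ + n * ω₂}

/-- `ω₁, ω₂` are the basis of a lattice: they are `ℝ`-linearly independent. -/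
def IsLatticeBasis (ω₁ ω₂ : ℂ) : Prop := LinearIndependent ℝ ![ω₁, ω₂]

/-- The nonzero lattice points. -/
def LatticePts' (ω₁ ω₂ : ℂ) : Set ℂ := {w | w ∈ LatticePts ω₁ ω₂ ∧ w ≠ 0}

/-- The Weierstrass sigma function of the lattice `ℤω₁ + ℤω₂`:
`σ(z) = z ∏_{ω ∈ Ω∖{0}} (1 − z/ω) exp(z/ω + z²/(2ω²))`. -/
def wSigma (ω₁ ω₂ : ℂ) (z : ℂ) : ℂ :=
  z * ∏' w : LatticePts' ω₁ ω₂,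
    (1 - z / (w : ℂ)) * Complex.exp (z / w + z ^ 2 / (2 * (w : ℂ) ^ 2))

/-- The Weierstrass zeta function `ζ = σ'/σ`. -/
def wZeta (ω₁ ω₂ : ℂ) (z : ℂ) : ℂ := deriv (wSigma ω₁ ω₂) z / wSigma ω₁ ω₂ z

/-- The Weierstrass elliptic function `℘ = -ζ'`. -/
def wP (ω₁ ω₂ : ℂ) (z : ℂ) : ℂ := - deriv (wZeta ω₁ ω₂) z

/-- The invariant `g₂ = 60 Σ_{ω ∈ Ω∖{0}} ω⁻⁴` of the lattice. -/
def g2 (ω₁ ω₂ : ℂ) : ℂ := 60 * ∑' w : LatticePts' ω₁ ω₂, ((w : ℂ) ^ 4)⁻¹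

/-- The invariant `g₃ = 140 Σ_{ω ∈ Ω∖{0}} ω⁻⁶` of the lattice. -/
def g3 (ω₁ ω₂ : ℂ) : ℂ := 140 * ∑' w : LatticePts' ω₁ ω₂, ((w : ℂ) ^ 6)⁻¹

/-- The quasi-period `η(ω) = ζ(z + ω) − ζ(z)` (independent of `z`; we evaluate at the
point `(ω₁+ω₂)/3`, which is never a pole of `ζ`, nor is its translate by a lattice point). -/
def wEta (ω₁ ω₂ : ℂ) (ω : ℂ) : ℂ :=
  wZeta ω₁ ω₂ ((ω₁ + ω₂) / 3 + ω) - wZeta ω₁ ω₂ ((ω₁ + ω₂) / 3)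

/-- The field of endomorphisms `k = {α ∈ ℂ : αΩ ⊆ Ω} ⊗_ℤ ℚ`, as a set of complex numbers:
the `α ∈ ℂ` such that `mα` stabilizes the lattice for some nonzero integer `m`. -/
def endQ (ω₁ ω₂ : ℂ) : Set ℂ :=
  {α | ∃ m : ℤ, m ≠ 0 ∧ ∀ w ∈ LatticePts ω₁ ω₂, (m : ℂ) * α * w ∈ LatticePts ω₁ ω₂}

/-- The transcendence degree over `ℚ` of the subfield `ℚ(S)` of `ℂ` generated by `S` is
at least `d`: there are `d` algebraically independent elements in `ℚ(S)`. -/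
def trdegGe (S : Set ℂ) (d : ℕ) : Prop :=
  ∃ x : Fin d → ℂ, (∀ i, x i ∈ IntermediateField.adjoin ℚ S) ∧ AlgebraicIndependent ℚ x

namespace DivisionValues

open Filter Topology

/-! ### The logarithmic derivative of the sigma product -/

/-- The factor of the Weierstrass product attached to `l`. Since `x / 0 = 0`, it is `1` for
`l = 0`, so the product may be taken over the whole lattice. -/
def fac (l z : ℂ) : ℂ := (1 - z / l) * Complex.exp (z / l + z ^ 2 / (2 * l ^ 2))

/-- The canonical product `σ(z) / z`. -/
def sigmaExc (L : PeriodPair) (z : ℂ) : ℂ := ∏' l : L.lattice, fac l z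

/-- The series of `ζ(z) - 1 / z`. -/
def zetaExc (L : PeriodPair) (z : ℂ) : ℂ :=
  ∑' l : L.lattice, if l.1 = 0 then 0 else (1 / (z - l) + 1 / l + z / (l : ℂ) ^ 2)

@[simp] lemma fac_zero_left (z : ℂ) : fac 0 z = 1 := by simp [fac]

lemma differentiable_fac (l : ℂ) : Differentiable ℂ (fac l) := by
  unfold fac
  fun_prop

/-- The Weierstrass factor is `1 + O(t³)`, because `d/dt ((1-t) exp(t+t²/2)) = -t² exp(t+t²/2)`. -/
lemma norm_factor_sub_one_le (t : ℂ) (ht : ‖t‖ ≤ 1) :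
    ‖(1 - t) * Complex.exp (t + t ^ 2 / 2) - 1‖ ≤ Real.exp 2 * ‖t‖ ^ 3 := by
  have key := (convex_closedBall (0 : ℂ) ‖t‖).norm_image_sub_le_of_norm_hasDerivWithin_le
    (f := fun t : ℂ ↦ (1 - t) * Complex.exp (t + t ^ 2 / 2))
    (f' := fun t : ℂ ↦ -t ^ 2 * Complex.exp (t + t ^ 2 / 2)) (C := Real.exp 2 * ‖t‖ ^ 2)
    (x := 0) (y := t) ?_ ?_ (by simp) (by simp)
  · simp only [sub_zero] at key
    refine (le_of_eq ?_).trans (key.trans (le_of_eq (by ring)))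
    simp
  · intro x _
    have h1 : HasDerivAt (fun t : ℂ ↦ t + t ^ 2 / 2) (1 + x) x := by
      refine ((hasDerivAt_id x).add (((hasDerivAt_id x).pow 2).div_const 2)).congr_deriv ?_
      simp
    refine HasDerivAt.hasDerivWithinAt ?_
    refine (((hasDerivAt_id x).const_sub 1).mul h1.cexp).congr_deriv ?_
    simp only [id]
    ring
  · intro x hx
    have hx : ‖x‖ ≤ ‖t‖ := by simpa using hx
    have h2 : ‖x + x ^ 2 / 2‖ ≤ 2 := by
      have := norm_add_le x (x ^ 2 / 2)
      have h3 : ‖x ^ 2 / 2‖ = ‖x‖ ^ 2 / 2 := by simp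
      nlinarith [norm_nonneg x]
    rw [norm_mul, norm_neg, norm_pow, mul_comm (Real.exp 2)]
    gcongr
    rw [Complex.norm_exp]
    exact Real.exp_le_exp.mpr ((Complex.re_le_norm _).trans h2)

lemma norm_fac_sub_one_le (r : ℝ) (hr : 0 < r) (l z : ℂ) (hz : ‖z‖ < r) (hl : 2 * r ≤ ‖l‖) :
    ‖fac l z - 1‖ ≤ Real.exp 2 * r ^ 3 * ‖l‖⁻¹ ^ 3 := by
  have hl0 : 0 < ‖l‖ := by linarith
  have h1 : ‖z / l‖ ≤ r * ‖l‖⁻¹ := by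
    rw [norm_div, div_eq_mul_inv]
    gcongr
  have h2 : ‖z / l‖ ≤ 1 := by
    rw [norm_div, div_le_one hl0]
    linarith
  have h3 : fac l z = (1 - z / l) * Complex.exp (z / l + (z / l) ^ 2 / 2) := by
    unfold fac
    congr 2
    ring
  rw [h3]
  refine (norm_factor_sub_one_le _ h2).trans ?_
  rw [mul_assoc, ← mul_pow]
  gcongr

variable (L : PeriodPair)

lemma summable_norm_inv_pow_three : Summable fun l : L.lattice ↦ ‖(l : ℂ)‖⁻¹ ^ 3 := by
  simpa using ZLattice.summable_norm_pow_inv L.lattice 3 (by simp)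

lemma eventually_le_norm (R : ℝ) : ∀ᶠ l : L.lattice in cofinite, R ≤ ‖(l : ℂ)‖ := by
  refine (isCompact_iff_finite.mp (isCompact_closedBall (0 : L.lattice) R)).subset ?_
  intro l hl
  have : ‖(l : ℂ)‖ < R := by simpa using hl
  simpa using this.le

/-- The complement of the nonzero lattice points, where `sigmaExc` does not vanish. -/
lemma isOpen_U : IsOpen ((L.lattice : Set ℂ) \ {0})ᶜ := L.isOpen_compl_lattice_sdiff

lemma fac_ne_zero (l : L.lattice) {z : ℂ} (hz : z ∈ ((L.lattice : Set ℂ) \ {0})ᶜ) :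
    fac l z ≠ 0 := by
  by_cases hl : (l : ℂ) = 0
  · simp [hl]
  · refine mul_ne_zero (fun h ↦ hz ?_) (Complex.exp_ne_zero _)
    have : z = l := by
      rw [sub_eq_zero, eq_comm, div_eq_one_iff_eq hl] at h
      exact h
    rw [this]
    exact ⟨l.2, hl⟩

lemma hasProdLocallyUniformlyOn_ball (r : ℝ) (hr : 0 < r) :
    HasProdLocallyUniformlyOn (fun (l : L.lattice) z ↦ fac l z) (sigmaExc L)
      (Metric.ball 0 r) := by
  have := Summable.hasProdLocallyUniformlyOn_one_add (K := Metric.ball (0 : ℂ) r)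
    (f := fun (l : L.lattice) z ↦ fac l z - 1) Metric.isOpen_ball
    ((summable_norm_inv_pow_three L).mul_left (Real.exp 2 * r ^ 3)) ?_ ?_
  · simp only [add_sub_cancel] at this
    exact this
  · filter_upwards [eventually_le_norm L (2 * r)] with l hl z hz
    exact norm_fac_sub_one_le r hr l z (by simpa using hz) hl
  · intro l
    exact ((differentiable_fac l).continuous.sub continuous_const).continuousOn

lemma differentiable_sigmaExc : Differentiable ℂ (sigmaExc L) := by
  intro z
  have h := hasProdLocallyUniformlyOn_ball L (‖z‖ + 1) (by positivity)
  rw [hasProdLocallyUniformlyOn_iff_tendstoLocallyUniformlyOn] at h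
  refine (h.differentiableOn (.of_forall fun s ↦ ?_) Metric.isOpen_ball).differentiableAt
    (Metric.isOpen_ball.mem_nhds (by simp))
  exact DifferentiableOn.fun_finsetProd fun l _ ↦ (differentiable_fac l).differentiableOn

lemma sigmaExc_ne_zero {z : ℂ} (hz : z ∈ ((L.lattice : Set ℂ) \ {0})ᶜ) : sigmaExc L z ≠ 0 := by
  have := tprod_one_add_ne_zero_of_summable (f := fun l : L.lattice ↦ fac l z - 1)
    (fun l ↦ by simpa using fac_ne_zero L l hz) ?_
  · simpa [sigmaExc] using this
  · refine Summable.of_norm_bounded_eventually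
      ((summable_norm_inv_pow_three L).mul_left (Real.exp 2 * (‖z‖ + 1) ^ 3)) ?_
    filter_upwards [eventually_le_norm L (2 * (‖z‖ + 1))] with l hl
    simpa using norm_fac_sub_one_le (‖z‖ + 1) (by positivity) l z (by simp) hl

lemma norm_zetaTerm_le (r : ℝ) (hr : 0 < r) (l z : ℂ) (hz : ‖z‖ < r) (hl : 2 * r ≤ ‖l‖) :
    ‖1 / (z - l) + 1 / l + z / l ^ 2‖ ≤ 2 * r ^ 2 * ‖l‖⁻¹ ^ 3 := by
  have hl0 : 0 < ‖l‖ := by linarith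
  have hl1 : l ≠ 0 := norm_pos_iff.mp hl0
  have h1 : ‖l‖ / 2 ≤ ‖z - l‖ := by
    have := norm_sub_norm_le l z
    rw [norm_sub_rev] at this
    linarith
  have h2 : z - l ≠ 0 := norm_pos_iff.mp (by linarith)
  have h3 : 1 / (z - l) + 1 / l + z / l ^ 2 = z ^ 2 / (l ^ 2 * (z - l)) := by
    field_simp
    ring
  rw [h3, norm_div, norm_mul, norm_pow, norm_pow]
  calc ‖z‖ ^ 2 / (‖l‖ ^ 2 * ‖z - l‖) ≤ r ^ 2 / (‖l‖ ^ 2 * (‖l‖ / 2)) := by gcongr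
    _ = 2 * r ^ 2 * ‖l‖⁻¹ ^ 3 := by field_simp

lemma hasSumLocallyUniformly_zetaExc :
    HasSumLocallyUniformly (fun (l : L.lattice) (z : ℂ) ↦
      if l.1 = 0 then 0 else (1 / (z - l) + 1 / l + z / (l : ℂ) ^ 2)) (zetaExc L) := by
  refine L.hasSumLocallyUniformly_aux (u := fun r l ↦ 2 * r ^ 2 * ‖(l : ℂ)‖⁻¹ ^ 3) _
    (fun r _ ↦ (summable_norm_inv_pow_three L).mul_left _) fun r hr ↦ ?_
  filter_upwards [eventually_ge_atTop (2 * r)] with R hR z hz l hl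
  split_ifs
  · simp only [norm_zero]
    positivity
  · exact norm_zetaTerm_le r hr l z hz (by linarith)

lemma logDeriv_fac (l : L.lattice) {z : ℂ} (hz : z ∈ ((L.lattice : Set ℂ) \ {0})ᶜ) :
    logDeriv (fac l) z = if l.1 = 0 then 0 else (1 / (z - l) + 1 / l + z / (l : ℂ) ^ 2) := by
  split_ifs with hl
  · have : fac l = fun _ ↦ 1 := by
      ext w
      simp [hl]
    rw [this]
    simp [logDeriv]
  · have hne : z - l ≠ 0 := fun h ↦ hz (by
      rw [sub_eq_zero.mp h]
      exact ⟨l.2, hl⟩)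
    have h0 : (1 - z / (l : ℂ)) ≠ 0 := left_ne_zero_of_mul (fac_ne_zero L l hz)
    have h1 : HasDerivAt (fun z : ℂ ↦ 1 - z / (l : ℂ)) (-(1 / l)) z :=
      ((hasDerivAt_id z).div_const _).const_sub 1
    have h2 : HasDerivAt (fun z : ℂ ↦ z / (l : ℂ) + z ^ 2 / (2 * (l : ℂ) ^ 2))
        (1 / l + z / (l : ℂ) ^ 2) z := by
      refine (((hasDerivAt_id z).div_const _).add
        (((hasDerivAt_id z).pow 2).div_const _)).congr_deriv ?_
      simp only [id]
      field_simp
      norm_num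
      ring
    have h3 := h1.mul h2.cexp
    have h4 : deriv (fac l) z = _ := h3.deriv
    rw [logDeriv_apply, h4, fac]
    have h5 : (l : ℂ) - z ≠ 0 := by
      rw [← neg_sub]
      exact neg_ne_zero.mpr hne
    have he := Complex.exp_ne_zero (z / l + z ^ 2 / (2 * (l : ℂ) ^ 2))
    generalize Complex.exp (z / l + z ^ 2 / (2 * (l : ℂ) ^ 2)) = e at *
    have h6 : (1 - z / (l : ℂ)) = -(z - l) / l := by
      field_simp
      ring
    rw [h6]
    field_simp
    ring

lemma logDeriv_sigmaExc {z : ℂ} (hz : z ∈ ((L.lattice : Set ℂ) \ {0})ᶜ) :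
    logDeriv (sigmaExc L) z = zetaExc L z := by
  have hs : IsOpen (((L.lattice : Set ℂ) \ {0})ᶜ ∩ Metric.ball 0 (‖z‖ + 1)) :=
    (isOpen_U L).inter Metric.isOpen_ball
  have hz' : z ∈ ((L.lattice : Set ℂ) \ {0})ᶜ ∩ Metric.ball 0 (‖z‖ + 1) := ⟨hz, by simp⟩
  have h := logDeriv_tprod_eq_tsum hs hz' (f := fun (l : L.lattice) ↦ fac l)
    (fun l ↦ fac_ne_zero L l hz) (fun l ↦ (differentiable_fac l).differentiableOn) ?_ ?_
    (sigmaExc_ne_zero L hz)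
  · refine h.trans (tsum_congr fun l ↦ logDeriv_fac L l hz)
  · refine ((hasSumLocallyUniformly_zetaExc L).hasSum (x := z)).summable.congr fun l ↦ ?_
    rw [logDeriv_fac L l hz]
  · exact ((hasProdLocallyUniformlyOn_ball L (‖z‖ + 1)
      (by positivity)).mono Set.inter_subset_right).multipliableLocallyUniformlyOn

lemma differentiableOn_zetaExc : DifferentiableOn ℂ (zetaExc L) ((L.lattice : Set ℂ) \ {0})ᶜ := by
  refine DifferentiableOn.congr (f := logDeriv (sigmaExc L)) ?_
    fun z hz ↦ (logDeriv_sigmaExc L hz).symm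
  intro z hz
  have : DifferentiableAt ℂ (deriv (sigmaExc L)) z :=
    ((differentiable_sigmaExc L).analyticAt z).deriv.differentiableAt
  exact (this.div (differentiable_sigmaExc L z) (sigmaExc_ne_zero L hz)).differentiableWithinAt

lemma hasDerivAt_zetaExc {z : ℂ} (hz : z ∈ ((L.lattice : Set ℂ) \ {0})ᶜ) :
    HasDerivAt (zetaExc L) (-(L.weierstrassPExcept 0 z)) z := by
  have hd : ∀ w ∈ ((L.lattice : Set ℂ) \ {0})ᶜ, ∀ l : L.lattice, HasDerivAt
      (fun w : ℂ ↦ if l.1 = 0 then 0 else (1 / (w - l) + 1 / l + w / (l : ℂ) ^ 2))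
      (-(if l.1 = 0 then 0 else (1 / (w - l) ^ 2 - 1 / (l : ℂ) ^ 2))) w := by
    intro w hw l
    by_cases hl : l.1 = 0
    · simpa [hl] using hasDerivAt_const w (0 : ℂ)
    · have hne : w - l ≠ 0 := fun h ↦ hw (by
        rw [sub_eq_zero.mp h]
        exact ⟨l.2, hl⟩)
      simp only [hl, if_false, one_div]
      refine (((((hasDerivAt_id w).sub_const (l : ℂ)).inv hne).add_const _).add
        ((hasDerivAt_id w).div_const _)).congr_deriv ?_
      simp only [id]
      field_simp
      ring
  have h1 : Set.EqOn (deriv (zetaExc L)) (fun z ↦ -(L.weierstrassPExcept 0 z))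
      ((L.lattice : Set ℂ) \ {0})ᶜ := by
    refine ((hasSumLocallyUniformly_zetaExc L).tendstoLocallyUniformlyOn.deriv
      (.of_forall fun s ↦ ?_) (isOpen_U L)).unique ?_
    · exact .fun_sum fun l _ w hw ↦ (hd w hw l).differentiableAt.differentiableWithinAt
    · refine (L.hasSumLocallyUniformly_weierstrassPExcept 0).tendstoLocallyUniformlyOn.fun_neg.congr
        ?_
      intro s w hw
      have := HasDerivAt.fun_sum fun (l : L.lattice) (_ : l ∈ s) ↦ hd w hw l
      simp only [Function.comp_apply]
      rw [this.deriv, Finset.sum_neg_distrib]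
  have h2 : deriv (zetaExc L) z = -(L.weierstrassPExcept 0 z) := h1 hz
  rw [← h2]
  exact ((differentiableOn_zetaExc L).differentiableAt ((isOpen_U L).mem_nhds hz)).hasDerivAt

lemma zetaExc_zero : zetaExc L 0 = 0 := by
  simp [zetaExc]

end DivisionValues

namespace DivisionValues

open Filter Topology

/-! ### Comparison with the Weierstrass functions of a period pair -/

variable (L : PeriodPair)

lemma mem_latticePts_iff {z : ℂ} : z ∈ LatticePts L.ω₁ L.ω₂ ↔ z ∈ L.lattice := by
  rw [L.mem_lattice]
  simp only [LatticePts, Set.mem_ofPred_eq, eq_comm]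

/-- The inclusion of the nonzero lattice points into the lattice. -/
def inclPts (w : LatticePts' L.ω₁ L.ω₂) : L.lattice := ⟨w.1, (mem_latticePts_iff L).mp w.2.1⟩

lemma inclPts_injective : Function.Injective (inclPts L) := fun _ _ h ↦
  Subtype.ext (congrArg (fun x : L.lattice ↦ (x : ℂ)) h)

lemma mem_range_inclPts {l : L.lattice} (hl : (l : ℂ) ≠ 0) : l ∈ Set.range (inclPts L) :=
  ⟨⟨l.1, (mem_latticePts_iff L).mpr l.2, hl⟩, rfl⟩

lemma wSigma_eq (z : ℂ) : wSigma L.ω₁ L.ω₂ z = z * sigmaExc L z := by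
  rw [wSigma, sigmaExc, ← (inclPts_injective L).tprod_eq]
  · rfl
  · intro l hl
    refine mem_range_inclPts L fun h ↦ hl ?_
    simp [h]

lemma tsum_latticePts (n : ℕ) (hn : n ≠ 0) :
    ∑' w : LatticePts' L.ω₁ L.ω₂, ((w : ℂ) ^ n)⁻¹ = L.G n := by
  rw [PeriodPair.G, ← (inclPts_injective L).tsum_eq]
  · rfl
  · intro l hl
    refine mem_range_inclPts L fun h ↦ hl ?_
    simp [h, hn]

lemma g2_eq : g2 L.ω₁ L.ω₂ = L.g₂ := by
  rw [g2, tsum_latticePts L 4 (by norm_num), PeriodPair.g₂]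

lemma g3_eq : g3 L.ω₁ L.ω₂ = L.g₃ := by
  rw [g3, tsum_latticePts L 6 (by norm_num), PeriodPair.g₃]

lemma ne_zero_of_notMem {z : ℂ} (hz : z ∉ L.lattice) : z ≠ 0 := by
  rintro rfl
  exact hz L.lattice.zero_mem

lemma mem_compl_of_notMem {z : ℂ} (hz : z ∉ L.lattice) :
    z ∈ ((L.lattice : Set ℂ) \ {0})ᶜ := fun h ↦ hz h.1

/-- The zeta function of the lattice, as a sum over the lattice. -/
def zeta (z : ℂ) : ℂ := 1 / z + zetaExc L z

lemma wZeta_eq {z : ℂ} (hz : z ∉ L.lattice) : wZeta L.ω₁ L.ω₂ z = zeta L z := by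
  have h0 := ne_zero_of_notMem L hz
  have h1 : wSigma L.ω₁ L.ω₂ = fun z ↦ z * sigmaExc L z := funext (wSigma_eq L)
  have h2 := logDeriv_mul (f := fun z : ℂ ↦ z) (g := sigmaExc L) z h0
    (sigmaExc_ne_zero L (mem_compl_of_notMem L hz)) differentiableAt_fun_id
    (differentiable_sigmaExc L z)
  rw [logDeriv_sigmaExc L (mem_compl_of_notMem L hz), logDeriv_apply] at h2
  rw [wZeta, h1, zeta, h2]
  simp [logDeriv_apply]

lemma isOpen_compl : IsOpen ((L.lattice : Set ℂ)ᶜ) := L.isClosed_lattice.isOpen_compl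

lemma hasDerivAt_zeta {z : ℂ} (hz : z ∉ L.lattice) :
    HasDerivAt (zeta L) (-(L.weierstrassP z)) z := by
  have h0 := ne_zero_of_notMem L hz
  have h1 : HasDerivAt (fun z : ℂ ↦ 1 / z) (-(z ^ 2)⁻¹) z := by
    simpa using hasDerivAt_inv h0
  refine (h1.add (hasDerivAt_zetaExc L (mem_compl_of_notMem L hz))).congr_deriv ?_
  have := L.weierstrassPExcept_add 0 z
  simp at this
  rw [← this]
  ring

lemma wP_eq {z : ℂ} (hz : z ∉ L.lattice) : wP L.ω₁ L.ω₂ z = L.weierstrassP z := by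
  have : wZeta L.ω₁ L.ω₂ =ᶠ[𝓝 z] zeta L := by
    filter_upwards [(isOpen_compl L).mem_nhds hz] with w hw using wZeta_eq L hw
  rw [wP, this.deriv_eq, (hasDerivAt_zeta L hz).deriv, neg_neg]

lemma hasDerivAt_P {z : ℂ} (hz : z ∉ L.lattice) :
    HasDerivAt L.weierstrassP (L.derivWeierstrassP z) z := by
  have := (L.analyticOnNhd_weierstrassP z hz).differentiableAt.hasDerivAt
  rwa [L.deriv_weierstrassP] at this

lemma analyticOnNhd_zeta : AnalyticOnNhd ℂ (zeta L) (L.lattice : Set ℂ)ᶜ :=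
  DifferentiableOn.analyticOnNhd
    (fun _ hz ↦ (hasDerivAt_zeta L hz).differentiableAt.differentiableWithinAt) (isOpen_compl L)

/-! ### Behaviour at the origin -/

lemma zero_mem_compl : (0 : ℂ) ∈ ((L.lattice : Set ℂ) \ {0})ᶜ := by simp

lemma tendsto_zetaExc : Tendsto (zetaExc L) (𝓝 0) (𝓝 0) := by
  have := (hasDerivAt_zetaExc L (zero_mem_compl L)).continuousAt.tendsto
  rwa [zetaExc_zero] at this

lemma P_eq (z : ℂ) : L.weierstrassP z = L.weierstrassPExcept 0 z + 1 / z ^ 2 := by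
  have := L.weierstrassPExcept_add 0 z
  simpa using this.symm

lemma P'_eq (z : ℂ) : L.derivWeierstrassP z = L.derivWeierstrassPExcept 0 z - 2 / z ^ 3 := by
  have := L.derivWeierstrassPExcept_sub 0 z
  simpa using this.symm

lemma continuousAt_PExcept : ContinuousAt (L.weierstrassPExcept 0) 0 :=
  (L.analyticAt_weierstrassPExcept 0).continuousAt

lemma continuousAt_P'Except : ContinuousAt (L.derivWeierstrassPExcept 0) 0 :=
  (L.analyticAt_derivWeierstrassPExcept 0).continuousAt

lemma tendsto_sq_mul_P : Tendsto (fun z ↦ z ^ 2 * L.weierstrassP z) (𝓝[≠] 0) (𝓝 1) := by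
  have h : Tendsto (fun z : ℂ ↦ z ^ 2 * L.weierstrassPExcept 0 z + 1) (𝓝[≠] 0) (𝓝 1) := by
    have : ContinuousAt (fun z : ℂ ↦ z ^ 2 * L.weierstrassPExcept 0 z + 1) 0 :=
      ((continuousAt_id.pow 2).mul (continuousAt_PExcept L)).add continuousAt_const
    simpa using this.tendsto.mono_left nhdsWithin_le_nhds
  refine h.congr' ?_
  filter_upwards [self_mem_nhdsWithin] with z hz
  have hz : z ≠ 0 := hz
  rw [P_eq]
  field_simp

lemma tendsto_cube_mul_P' :
    Tendsto (fun z ↦ z ^ 3 * L.derivWeierstrassP z) (𝓝[≠] 0) (𝓝 (-2)) := by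
  have h : Tendsto (fun z : ℂ ↦ z ^ 3 * L.derivWeierstrassPExcept 0 z - 2) (𝓝[≠] 0) (𝓝 (-2)) := by
    have : ContinuousAt (fun z : ℂ ↦ z ^ 3 * L.derivWeierstrassPExcept 0 z - 2) 0 :=
      ((continuousAt_id.pow 3).mul (continuousAt_P'Except L)).sub continuousAt_const
    simpa using this.tendsto.mono_left nhdsWithin_le_nhds
  refine h.congr' ?_
  filter_upwards [self_mem_nhdsWithin] with z hz
  have hz : z ≠ 0 := hz
  rw [P'_eq]
  field_simp

/-- With `F` and `F'` continuous at `0`, the quotient `(℘' - F') / (2 (℘ - F))` is `-1/u + o(1)`: it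
cancels the pole of `ζ` in the addition theorem. -/
lemma tendsto_half_slope (F F' : ℂ → ℂ) (hF : ContinuousAt F 0) (hF' : ContinuousAt F' 0) :
    Tendsto (fun u ↦ 1 / u + (L.derivWeierstrassP u - F' u) / (L.weierstrassP u - F u) / 2)
      (𝓝[≠] 0) (𝓝 0) := by
  set A : ℂ → ℂ := fun u ↦ L.weierstrassPExcept 0 u - F u
  set B : ℂ → ℂ := fun u ↦ L.derivWeierstrassPExcept 0 u - F' u
  have hA : ContinuousAt A 0 := (continuousAt_PExcept L).sub hF
  have hB : ContinuousAt B 0 := (continuousAt_P'Except L).sub hF'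
  have h1 : ContinuousAt (fun u ↦ (2 * u * A u + u ^ 2 * B u) / (2 * (1 + u ^ 2 * A u))) 0 := by
    refine ContinuousAt.div ?_ ?_ (by simp)
    · exact ((continuousAt_const.mul continuousAt_id).mul hA).add ((continuousAt_id.pow 2).mul hB)
    · exact continuousAt_const.mul (continuousAt_const.add ((continuousAt_id.pow 2).mul hA))
  have h2 : ContinuousAt (fun u ↦ 1 + u ^ 2 * A u) 0 :=
    continuousAt_const.add ((continuousAt_id.pow 2).mul hA)
  have h3 : ∀ᶠ u in 𝓝[≠] 0, 1 + u ^ 2 * A u ≠ 0 :=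
    (h2.eventually_ne (by simp)).filter_mono nhdsWithin_le_nhds
  have h4 := h1.tendsto.mono_left (nhdsWithin_le_nhds (s := {0}ᶜ))
  simp only [ne_eq, OfNat.ofNat_ne_zero, not_false_eq_true, zero_pow, zero_mul, mul_zero, add_zero,
    mul_one, zero_div] at h4
  refine h4.congr' ?_
  filter_upwards [self_mem_nhdsWithin, h3] with u hu h3
  have hu : u ≠ 0 := hu
  have h5 : L.weierstrassP u - F u = (1 + u ^ 2 * A u) / u ^ 2 := by
    simp only [A]
    rw [P_eq]
    field_simp
    ring
  have h6 : L.derivWeierstrassP u - F' u = (u ^ 3 * B u - 2) / u ^ 3 := by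
    simp only [B]
    rw [P'_eq]
    field_simp
    ring
  rw [h5, h6]
  field_simp
  ring

end DivisionValues

namespace DivisionValues

open Filter Topology

/-! ### Generic points: properties holding off a countable set -/

lemma dense_of_mem_cocountable {s : Set ℂ} (hs : s ∈ cocountable) : Dense s := by
  have := (mem_cocountable.mp hs).dense_compl ℝ
  rwa [compl_compl] at this

lemma frequently_of_mem_cocountable {s : Set ℂ} (hs : s ∈ cocountable) (x : ℂ) :
    ∃ᶠ z in 𝓝[≠] x, z ∈ s := by
  have h1 : s ∩ {x}ᶜ ∈ cocountable := by
    refine inter_mem hs (mem_cocountable.mpr ?_)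
    simp
  have h2 := mem_closure_iff_frequently.mp ((dense_of_mem_cocountable h1) x)
  rw [frequently_nhdsWithin_iff]
  exact h2

lemma isPreconnected_of_mem_cocountable {s : Set ℂ} (hs : s ∈ cocountable) :
    IsPreconnected s := by
  have := (mem_cocountable.mp hs).isConnected_compl_of_one_lt_rank (E := ℂ) (by simp)
  rw [compl_compl] at this
  exact this.isPreconnected

instance countableInterFilter_cocountable : CountableInterFilter (cocountable : Filter ℂ) :=
  CardinalInterFilter.toCountableInterFilter _ Cardinal.aleph0_lt_aleph_one

instance neBot_cocountable : (cocountable : Filter ℂ).NeBot := by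
  refine ⟨fun h ↦ ?_⟩
  have h0 : (∅ : Set ℂ) ∈ cocountable := by simp [h]
  simpa using (dense_of_mem_cocountable h0).nonempty

/-- The zeros of an analytic function are isolated, hence countable, unless it vanishes
identically. -/
lemma eqOn_zero_or_generic_ne_zero {U : Set ℂ} (hU : U ∈ cocountable) {f : ℂ → ℂ}
    (hf : AnalyticOnNhd ℂ f U) :
    Set.EqOn f 0 U ∨ ∀ᶠ z in cocountable, f z ≠ 0 := by
  rw [or_iff_not_imp_left]
  intro hne
  have h1 : ∀ x ∈ U, ∀ᶠ z in 𝓝[≠] x, f z ≠ 0 := by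
    intro x hx
    by_contra hcon
    refine hne (hf.eqOn_zero_of_preconnected_of_frequently_eq_zero
      (isPreconnected_of_mem_cocountable hU) hx ?_)
    exact fun h ↦ hcon h
  obtain ⟨t, -, htc, ht⟩ := TopologicalSpace.countable_cover_nhdsWithin
    (f := fun x : ℂ ↦ ({x} : Set ℂ)) (s := {z | z ∈ U ∧ f z = 0}) (by
      rintro x ⟨hx, -⟩
      have h2 := eventually_nhdsWithin_iff.mp (h1 x hx)
      refine mem_nhdsWithin_iff_eventually.mpr ?_
      filter_upwards [h2] with z hz hz'
      by_contra h3
      exact hz h3 hz'.2)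
  have h4 : {z | z ∈ U ∧ f z = 0}ᶜ ∈ cocountable := by
    rw [mem_cocountable, compl_compl]
    exact htc.mono (by simpa using ht)
  filter_upwards [hU, h4] with z hz1 hz2 hz3
  exact hz2 ⟨hz1, hz3⟩

/-- A pole at `0` with nonzero leading coefficient rules out that `f` vanishes identically. -/
lemma generic_ne_zero_of_tendsto {U : Set ℂ} (hU : U ∈ cocountable) {f : ℂ → ℂ}
    (hf : AnalyticOnNhd ℂ f U) (k : ℕ) {b : ℂ} (hb : b ≠ 0)
    (h : Tendsto (fun z ↦ z ^ k * f z) (𝓝[≠] 0) (𝓝 b)) :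
    ∀ᶠ z in cocountable, f z ≠ 0 := by
  refine (eqOn_zero_or_generic_ne_zero hU hf).resolve_left fun h0 ↦ ?_
  obtain ⟨z, hz1, hz2⟩ := ((frequently_of_mem_cocountable hU 0).and_eventually
    (h.eventually_ne hb)).exists
  exact hz2 (by rw [h0 hz1]; simp)

lemma eventually_mul_ne_of_cocountable {s : Set ℂ} (hs : s ∈ cocountable) {c : ℂ} (hc : c ≠ 0) :
    ∀ᶠ z in cocountable, c * z ∈ s := by
  have : ((fun z ↦ c * z) ⁻¹' s) ∈ cocountable := by
    rw [mem_cocountable, ← Set.preimage_compl]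
    exact (mem_cocountable.mp hs).preimage (mul_right_injective₀ hc)
  exact this

lemma eventually_sub_of_cocountable {s : Set ℂ} (hs : s ∈ cocountable) (c : ℂ) :
    ∀ᶠ z in cocountable, c - z ∈ s := by
  have : ((fun z ↦ c - z) ⁻¹' s) ∈ cocountable := by
    rw [mem_cocountable, ← Set.preimage_compl]
    exact (mem_cocountable.mp hs).preimage sub_right_injective
  exact this

/-! ### Specialising algebraic relations -/

open Polynomial Polynomial.Bivariate

section Algebraic

variable {k : Type*} [Field k] [Algebra k ℂ]

lemma aevalAeval_eq_eval₂ (x y : ℂ) (Φ : k[X][Y]) :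
    aevalAeval x y Φ = Φ.eval₂ (aeval x : k[X] →ₐ[k] ℂ).toRingHom y := by
  induction Φ using Polynomial.induction_on' with
  | add p q hp hq => rw [map_add, hp, hq, eval₂_add]
  | monomial n a => simp

lemma analyticOnNhd_aevalAeval {U : Set ℂ} {f g : ℂ → ℂ} (hf : AnalyticOnNhd ℂ f U)
    (hg : AnalyticOnNhd ℂ g U) (Φ : k[X][Y]) :
    AnalyticOnNhd ℂ (fun z ↦ aevalAeval (g z) (f z) Φ) U := by
  have h1 : ∀ P : k[X], AnalyticOnNhd ℂ (fun z ↦ aeval (g z) P) U := by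
    intro P
    induction P using Polynomial.induction_on' with
    | add p q hp hq =>
      simp only [map_add]
      exact hp.add hq
    | monomial n a =>
      simp only [aeval_monomial]
      exact analyticOnNhd_const.mul (hg.pow n)
  induction Φ using Polynomial.induction_on' with
  | add p q hp hq =>
    simp only [map_add]
    exact hp.add hq
  | monomial n a =>
    simp only [aevalAeval_eq_eval₂, eval₂_monomial]
    exact (h1 a).mul (hf.pow n)

open scoped IntermediateField.algebraAdjoinAdjoin in
/-- The inner variable of `Φ` is evaluated at `x`, the outer one at `y`. Clearing denominators in an
algebraic equation for `y` over `k(x)` gives a nonzero `Φ`. -/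
lemma exists_bivariate_of_isAlgebraic {x y : ℂ}
    (h : IsAlgebraic (IntermediateField.adjoin k {x}) y) :
    ∃ Φ : k[X][Y], Φ ≠ 0 ∧ aevalAeval x y Φ = 0 := by
  have h1 : IsAlgebraic (Algebra.adjoin k {x}) y :=
    (IsFractionRing.isAlgebraic_iff (Algebra.adjoin k {x}) (IntermediateField.adjoin k {x}) ℂ).mpr h
  obtain ⟨q, hq, hq0⟩ := h1
  have hmem : ∀ P : k[X], aeval x P ∈ Algebra.adjoin k {x} := fun P ↦ by
    rw [Algebra.adjoin_singleton_eq_range_aeval]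
    exact ⟨P, rfl⟩
  let ψ : k[X] →ₐ[k] Algebra.adjoin k {x} := (aeval x).codRestrict _ hmem
  have hψ : Function.Surjective ψ := by
    rintro ⟨w, hw⟩
    have hw' := hw
    rw [Algebra.adjoin_singleton_eq_range_aeval] at hw'
    obtain ⟨P, hP⟩ := hw'
    exact ⟨P, Subtype.ext hP⟩
  obtain ⟨Φ, rfl⟩ := Polynomial.map_surjective ψ.toRingHom hψ q
  refine ⟨Φ, ?_, ?_⟩
  · rintro rfl
    simp at hq
  · rw [aeval_def, eval₂_map] at hq0
    rw [aevalAeval_eq_eval₂, ← hq0]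
    rfl

/-- **Specialisation.** An algebraic relation over a countable field `k` between two analytic
functions at generic points persists at a point where the first one takes a value in `k`: there
are only countably many candidate relations, so one of them holds identically, and it may be
assumed not to be divisible by `Y - a`. -/
lemma isAlgebraic_of_generic [Countable k] {U : Set ℂ} (hU : U ∈ cocountable) {f g : ℂ → ℂ}
    (hf : AnalyticOnNhd ℂ f U) (hg : AnalyticOnNhd ℂ g U) (a : k)
    (hfa : ∀ᶠ z in cocountable, f z ≠ algebraMap k ℂ a)
    (hrel : ∀ᶠ z in cocountable, ∃ Φ : k[X][Y], Φ ≠ 0 ∧ aevalAeval (g z) (f z) Φ = 0)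
    {z₀ : ℂ} (hz₀ : z₀ ∈ U) (ha : f z₀ = algebraMap k ℂ a) : IsAlgebraic k (g z₀) := by
  have hc : ∀ (R : Type _) [CommRing R] [Countable R], Countable R[X] := fun R _ _ ↦
    Cardinal.mk_le_aleph0_iff.mp (Polynomial.cardinalMk_le_max.trans (by simp))
  have := hc k
  have := hc k[X]
  have h1 : ∀ᶠ z in cocountable, ∃ Ψ : k[X][Y], Ψ.eval (C a) ≠ 0 ∧
      aevalAeval (g z) (f z) Ψ = 0 := by
    filter_upwards [hfa, hrel] with z hz ⟨Φ, hΦ, hΦ0⟩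
    obtain ⟨Ψ, hΨ, hdvd⟩ := exists_eq_pow_rootMultiplicity_mul_and_not_dvd Φ hΦ (C a)
    refine ⟨Ψ, fun h ↦ hdvd (dvd_iff_isRoot.mpr h), ?_⟩
    rw [hΨ, map_mul, map_pow] at hΦ0
    refine (mul_eq_zero.mp hΦ0).resolve_left (pow_ne_zero _ ?_)
    simpa [aevalAeval_eq_eval₂, sub_eq_zero] using hz
  by_cases h2 : ∃ Ψ : k[X][Y], Ψ.eval (C a) ≠ 0 ∧
      Set.EqOn (fun z ↦ aevalAeval (g z) (f z) Ψ) 0 U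
  · obtain ⟨Ψ, hΨ, hΨ0⟩ := h2
    refine ⟨Ψ.eval (C a), hΨ, ?_⟩
    have h3 := hΨ0 hz₀
    simp only [Pi.zero_apply, ha, aevalAeval_eq_eval₂] at h3
    have h4 : (aeval (g z₀) : k[X] →ₐ[k] ℂ).toRingHom (C a) = algebraMap k ℂ a := by simp
    rw [← h4, eval₂_at_apply] at h3
    exact h3
  · push Not at h2
    have h3 : ∀ᶠ z in cocountable, ∀ Ψ : k[X][Y], Ψ.eval (C a) ≠ 0 →
        aevalAeval (g z) (f z) Ψ ≠ 0 := by
      rw [eventually_countable_forall]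
      intro Ψ
      by_cases hΨ : Ψ.eval (C a) = 0
      · simp [hΨ]
      · filter_upwards [(eqOn_zero_or_generic_ne_zero hU
          (analyticOnNhd_aevalAeval hf hg Ψ)).resolve_left (h2 Ψ hΨ)] with z hz _ using hz
    obtain ⟨z, ⟨Ψ, hΨ, hΨ0⟩, hz⟩ := (h1.and h3).exists
    exact absurd hΨ0 (hz Ψ hΨ)

lemma exists_bivariate_swap {x y : ℂ} (h : ∃ Φ : k[X][Y], Φ ≠ 0 ∧ aevalAeval x y Φ = 0) :
    ∃ Φ : k[X][Y], Φ ≠ 0 ∧ aevalAeval y x Φ = 0 := by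
  obtain ⟨Φ, h1, h2⟩ := h
  refine ⟨swap Φ, ?_, by rw [Bivariate.aevalAeval_swap, h2]⟩
  simpa using h1

end Algebraic

end DivisionValues

namespace DivisionValues

open Filter Topology

/-! ### The differential equation and the addition theorem -/

variable (L : PeriodPair)

lemma compl_mem_cocountable : (L.lattice : Set ℂ)ᶜ ∈ cocountable := by
  rw [mem_cocountable, compl_compl]
  refine (Set.countable_range fun x : ℤ × ℤ ↦ x.1 * L.ω₁ + x.2 * L.ω₂).mono fun z hz ↦ ?_
  obtain ⟨m, n, h⟩ := L.mem_lattice.mp hz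
  exact ⟨(m, n), h⟩

lemma generic_P'_ne_zero : ∀ᶠ z in cocountable, L.derivWeierstrassP z ≠ 0 :=
  generic_ne_zero_of_tendsto (compl_mem_cocountable L) L.analyticOnNhd_derivWeierstrassP 3
    (by norm_num) (tendsto_cube_mul_P' L)

/-- `℘'' = 6 ℘² - g₂ / 2`. -/
lemma hasDerivAt_P' {z : ℂ} (hz : z ∉ L.lattice) :
    HasDerivAt L.derivWeierstrassP (6 * L.weierstrassP z ^ 2 - L.g₂ / 2) z := by
  have hd : ∀ w ∉ L.lattice, HasDerivAt L.derivWeierstrassP (deriv L.derivWeierstrassP w) w :=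
    fun w hw ↦ (L.analyticOnNhd_derivWeierstrassP w hw).differentiableAt.hasDerivAt
  set h : ℂ → ℂ := fun w ↦ deriv L.derivWeierstrassP w - (6 * L.weierstrassP w ^ 2 - L.g₂ / 2)
  have han : AnalyticOnNhd ℂ h (L.lattice : Set ℂ)ᶜ :=
    L.analyticOnNhd_derivWeierstrassP.deriv.sub
      ((analyticOnNhd_const.mul (L.analyticOnNhd_weierstrassP.pow 2)).sub analyticOnNhd_const)
  -- differentiating the Weierstrass equation gives the claim wherever `℘' ≠ 0`
  have hprod : ∀ w ∉ L.lattice, L.derivWeierstrassP w * h w = 0 := by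
    intro w hw
    have h1 := (hd w hw).pow 2
    have h2 := ((((hasDerivAt_P L hw).pow 3).const_mul 4).sub
      ((hasDerivAt_P L hw).const_mul L.g₂)).sub_const L.g₃
    have h3 := h1.congr_of_eventuallyEq (f₁ := fun w ↦
        4 * L.weierstrassP w ^ 3 - L.g₂ * L.weierstrassP w - L.g₃) (by
      filter_upwards [(isOpen_compl L).mem_nhds hw] with x hx
      exact (L.derivWeierstrassP_sq x hx).symm)
    have h4 := h3.unique h2
    simp only [h]
    norm_num at h4
    linear_combination h4 / 2
  rcases eqOn_zero_or_generic_ne_zero (compl_mem_cocountable L) han with h0 | h0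
  · have := h0 hz
    simp only [h, Pi.zero_apply, sub_eq_zero] at this
    rw [← this]
    exact hd z hz
  · obtain ⟨w, hw1, hw2, hw3⟩ :=
      (h0.and ((generic_P'_ne_zero L).and (compl_mem_cocountable L))).exists
    exact absurd (hprod w hw3) (mul_ne_zero hw2 hw1)

lemma continuousOn_P : ContinuousOn L.weierstrassP (L.lattice : Set ℂ)ᶜ :=
  L.analyticOnNhd_weierstrassP.continuousOn

/-- The set of `u` at which the addition formula for `u` and `c - u` is not degenerate. -/
def addSet (c : ℂ) : Set ℂ :=
  {u | u ∉ L.lattice ∧ c - u ∉ L.lattice ∧ L.weierstrassP u - L.weierstrassP (c - u) ≠ 0}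

lemma isOpen_addSet (c : ℂ) : IsOpen (addSet L c) := by
  rw [isOpen_iff_mem_nhds]
  rintro u ⟨h1, h2, h3⟩
  have hc1 : ContinuousAt (fun u : ℂ ↦ c - u) u := by fun_prop
  have hc : ContinuousAt (fun u ↦ L.weierstrassP u - L.weierstrassP (c - u)) u :=
    (hasDerivAt_P L h1).continuousAt.sub ((hasDerivAt_P L h2).continuousAt.comp hc1)
  filter_upwards [(isOpen_compl L).mem_nhds h1, hc1 ((isOpen_compl L).mem_nhds h2),
    hc.eventually_ne h3] with w a1 a2 a3 using ⟨a1, a2, a3⟩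

lemma addSet_mem_cocountable {c : ℂ} (hc : c ∉ L.lattice) : addSet L c ∈ cocountable := by
  have h1 := compl_mem_cocountable L
  have h2 : {u | c - u ∈ (L.lattice : Set ℂ)ᶜ} ∈ cocountable := eventually_sub_of_cocountable h1 c
  have h3 := generic_ne_zero_of_tendsto (inter_mem h1 h2)
    (f := fun u ↦ L.weierstrassP u - L.weierstrassP (c - u)) (b := 1) ?_ 2 one_ne_zero ?_
  · filter_upwards [h1, h2, h3] with u a1 a2 a3 using ⟨a1, a2, a3⟩
  · refine (L.analyticOnNhd_weierstrassP.mono Set.inter_subset_left).sub ?_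
    refine L.analyticOnNhd_weierstrassP.comp (g := L.weierstrassP) (f := fun u ↦ c - u)
      (analyticOnNhd_const.sub analyticOnNhd_id) (fun u hu ↦ hu.2)
  · have h4 : ContinuousAt (fun u ↦ u ^ 2 * L.weierstrassP (c - u)) 0 := by
      have : ContinuousAt L.weierstrassP (c - 0) := by
        rw [sub_zero]
        exact (hasDerivAt_P L hc).continuousAt
      exact (continuousAt_id.pow 2).mul
        (ContinuousAt.comp (f := fun u : ℂ ↦ c - u) this (by fun_prop))
    have h5 := (tendsto_sq_mul_P L).sub (h4.tendsto.mono_left (nhdsWithin_le_nhds (s := {0}ᶜ)))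
    simp only [ne_eq, OfNat.ofNat_ne_zero, not_false_eq_true, zero_pow, zero_mul, sub_zero] at h5
    refine h5.congr fun u ↦ ?_
    ring

/-- The function of `u` whose vanishing is the addition theorem for `ζ`. -/
def addFun (c u : ℂ) : ℂ :=
  zeta L u + zeta L (c - u) - zeta L c + (L.derivWeierstrassP u - L.derivWeierstrassP (c - u)) /
    (L.weierstrassP u - L.weierstrassP (c - u)) / 2

lemma hasDerivAt_addFun {c u : ℂ} (hu : u ∈ addSet L c) : HasDerivAt (addFun L c) 0 u := by
  obtain ⟨h1, h2, h3⟩ := hu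
  have hsub : HasDerivAt (fun u : ℂ ↦ c - u) (-1) u := by
    simpa using (hasDerivAt_id u).const_sub c
  have hz := (hasDerivAt_zeta L h2).comp u hsub
  have hP := (hasDerivAt_P L h2).comp u hsub
  have hP' := (hasDerivAt_P' L h2).comp u hsub
  have h := (((hasDerivAt_zeta L h1).add hz).sub_const (zeta L c)).add
    ((((hasDerivAt_P' L h1).sub hP').div ((hasDerivAt_P L h1).sub hP) h3).div_const 2)
  refine h.congr_deriv ?_
  simp only [Function.comp_apply, Pi.sub_apply]
  have e1 := L.derivWeierstrassP_sq u h1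
  have e2 := L.derivWeierstrassP_sq (c - u) h2
  generalize L.weierstrassP u = X at *
  generalize L.weierstrassP (c - u) = Y at *
  generalize L.derivWeierstrassP u = X' at *
  generalize L.derivWeierstrassP (c - u) = Y' at *
  field_simp
  linear_combination 2 * e2 - 2 * e1

/-- Addition theorem for `ζ`. The difference of the two sides, as a function of `u` with `u + v`
fixed, has derivative `0` on a connected set and tends to `0` as `u → 0`. -/
lemma zeta_add {u v : ℂ} (hu : u ∉ L.lattice) (hv : v ∉ L.lattice) (huv : u + v ∉ L.lattice)
    (hne : L.weierstrassP u - L.weierstrassP v ≠ 0) :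
    zeta L (u + v) = zeta L u + zeta L v + (L.derivWeierstrassP u - L.derivWeierstrassP v) /
      (L.weierstrassP u - L.weierstrassP v) / 2 := by
  set c := u + v with hcdef
  have hvc : c - u = v := by simp [hcdef]
  have hu' : u ∈ addSet L c := ⟨hu, by rwa [hvc], by rwa [hvc]⟩
  have hconst : ∀ w ∈ addSet L c, addFun L c w = addFun L c u := fun w hw ↦
    (isOpen_addSet L c).is_const_of_deriv_eq_zero
      (isPreconnected_of_mem_cocountable (addSet_mem_cocountable L huv))
      (fun x hx ↦ (hasDerivAt_addFun L hx).differentiableAt.differentiableWithinAt)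
      (fun x hx ↦ (hasDerivAt_addFun L hx).deriv) hw hu'
  have hcont : ∀ f : ℂ → ℂ, ContinuousAt f c → ContinuousAt (fun u ↦ f (c - u)) 0 := by
    intro f hf
    have : ContinuousAt f (c - 0) := by rwa [sub_zero]
    exact ContinuousAt.comp (f := fun u : ℂ ↦ c - u) this (by fun_prop)
  have hlim : Tendsto (addFun L c) (𝓝[≠] 0) (𝓝 0) := by
    have t1 := tendsto_half_slope L _ _ (hcont _ (hasDerivAt_P L huv).continuousAt)
      (hcont _ (hasDerivAt_P' L huv).continuousAt)
    have t2 := (tendsto_zetaExc L).mono_left (nhdsWithin_le_nhds (s := {0}ᶜ))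
    have t3 := (hcont _ (hasDerivAt_zeta L huv).continuousAt).tendsto.mono_left
      (nhdsWithin_le_nhds (s := {0}ᶜ))
    have t4 := (t1.add (t2.add t3)).sub_const (zeta L c)
    simp only [sub_zero, zero_add, sub_self] at t4
    refine t4.congr fun u ↦ ?_
    simp only [addFun, zeta]
    ring
  have hzero : addFun L c u = 0 := by
    by_contra h
    obtain ⟨w, hw1, hw2⟩ := ((frequently_of_mem_cocountable (addSet_mem_cocountable L huv)
      0).and_eventually (hlim.eventually_ne (Ne.symm h))).exists
    exact hw2 (hconst w hw1)
  rw [addFun, hvc] at hzero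
  linear_combination -hzero

/-- Addition theorem for `℘`, in a rational form not symmetric in `u` and `v`, obtained
by differentiating the one for `ζ` in `u`. -/
lemma P_add {u v : ℂ} (hu : u ∉ L.lattice) (hv : v ∉ L.lattice) (huv : u + v ∉ L.lattice)
    (hne : L.weierstrassP u - L.weierstrassP v ≠ 0) :
    L.weierstrassP (u + v) = L.weierstrassP u -
      ((6 * L.weierstrassP u ^ 2 - L.g₂ / 2) * (L.weierstrassP u - L.weierstrassP v) -
        (L.derivWeierstrassP u - L.derivWeierstrassP v) * L.derivWeierstrassP u) /
          (L.weierstrassP u - L.weierstrassP v) ^ 2 / 2 := by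
  have hadd : HasDerivAt (fun u : ℂ ↦ u + v) 1 u := by
    simpa using (hasDerivAt_id u).add_const v
  have h1 := (hasDerivAt_zeta L huv).comp u hadd
  have hP := (hasDerivAt_P L hu).sub_const (L.weierstrassP v)
  have h2 := ((hasDerivAt_zeta L hu).add_const (zeta L v)).add
    ((((hasDerivAt_P' L hu).sub_const (L.derivWeierstrassP v)).div hP hne).div_const 2)
  have h3 := h2.unique (h1.congr_of_eventuallyEq (by
    filter_upwards [(isOpen_compl L).mem_nhds hu,
      hadd.continuousAt ((isOpen_compl L).mem_nhds huv),
      hP.continuousAt.eventually_ne hne] with w a1 a2 a3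
    exact (zeta_add L a1 hv a2 a3).symm))
  linear_combination h3

/-- Duplication formula for `ζ`: the limit of the addition theorem as `v → z`. -/
lemma zeta_two_mul {z : ℂ} (hz : z ∉ L.lattice) (h2z : 2 * z ∉ L.lattice)
    (hne : L.derivWeierstrassP z ≠ 0) :
    zeta L (2 * z) = 2 * zeta L z +
      (6 * L.weierstrassP z ^ 2 - L.g₂ / 2) / L.derivWeierstrassP z / 2 := by
  have hzz : z + z ∉ L.lattice := by rwa [← two_mul]
  have hadd : ContinuousAt (fun v : ℂ ↦ z + v) z := by fun_prop
  have t1 : Tendsto (fun v ↦ zeta L (z + v)) (𝓝[≠] z) (𝓝 (zeta L (z + z))) :=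
    (ContinuousAt.comp (f := fun v : ℂ ↦ z + v) (hasDerivAt_zeta L hzz).continuousAt
      hadd).tendsto.mono_left nhdsWithin_le_nhds
  have t2 := ((hasDerivAt_zeta L hz).continuousAt.tendsto.mono_left
    (nhdsWithin_le_nhds (s := {z}ᶜ))).const_add (zeta L z)
  have t3 := ((hasDerivAt_P' L hz).tendsto_slope.div (hasDerivAt_P L hz).tendsto_slope
    hne).div_const 2
  have t4 := t1.congr' (f₂ := _) (by
    filter_upwards [self_mem_nhdsWithin,
      ((isOpen_compl L).mem_nhds hz |> mem_nhdsWithin_of_mem_nhds),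
      mem_nhdsWithin_of_mem_nhds (hadd ((isOpen_compl L).mem_nhds hzz)),
      (hasDerivAt_P L hz).eventually_ne hne (c := L.weierstrassP z)] with v a1 a2 a3 a4
    exact zeta_add L hz a2 a3 (sub_ne_zero.mpr a4.symm))
  have t5 := tendsto_nhds_unique t4 ((t2.add t3).congr' (by
    filter_upwards [self_mem_nhdsWithin] with v hv
    have hv' : v - z ≠ 0 := sub_ne_zero.mpr hv
    rw [← neg_sub (L.derivWeierstrassP v), ← neg_sub (L.weierstrassP v), neg_div_neg_eq]
    simp only [Pi.div_apply, slope_def_field]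
    rw [div_div_div_cancel_right₀ hv']))
  rw [two_mul, t5]
  ring

/-- Duplication formula for `℘`, obtained by differentiating the one for `ζ`. -/
lemma P_two_mul {z : ℂ} (hz : z ∉ L.lattice) (h2z : 2 * z ∉ L.lattice)
    (hne : L.derivWeierstrassP z ≠ 0) :
    L.weierstrassP (2 * z) = L.weierstrassP z -
      (12 * L.weierstrassP z * L.derivWeierstrassP z ^ 2 -
        (6 * L.weierstrassP z ^ 2 - L.g₂ / 2) ^ 2) / L.derivWeierstrassP z ^ 2 / 4 := by
  have hmul : HasDerivAt (fun z : ℂ ↦ 2 * z) 2 z := by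
    simpa using (hasDerivAt_id z).const_mul 2
  have h1 := (hasDerivAt_zeta L h2z).comp z hmul
  have h2 := ((hasDerivAt_zeta L hz).const_mul 2).add
    ((((((hasDerivAt_P L hz).pow 2).const_mul 6).sub_const (L.g₂ / 2)).div
      (hasDerivAt_P' L hz) hne).div_const 2)
  have h3 := h2.unique (h1.congr_of_eventuallyEq (by
    filter_upwards [(isOpen_compl L).mem_nhds hz,
      hmul.continuousAt ((isOpen_compl L).mem_nhds h2z),
      (hasDerivAt_P' L hz).continuousAt.eventually_ne hne] with w a1 a2 a3
    exact (zeta_two_mul L a1 a2 a3).symm))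
  norm_num at h3
  linear_combination h3 / 2

end DivisionValues

namespace DivisionValues

open Filter Topology

/-! ### Multiplication by integers at generic points -/

variable (L : PeriodPair)

/-- The points at which no denominator vanishes when multiples are computed by `n z + z`. -/
structure Good (z : ℂ) : Prop where
  notMem : ∀ n : ℕ, 1 ≤ n → (n : ℂ) * z ∉ L.lattice
  P' : L.derivWeierstrassP z ≠ 0
  P_sub : ∀ n : ℕ, 2 ≤ n → L.weierstrassP (n * z) - L.weierstrassP z ≠ 0

lemma mul_mem_cocountable (n : ℕ) (hn : 1 ≤ n) :
    {z | (n : ℂ) * z ∈ (L.lattice : Set ℂ)ᶜ} ∈ cocountable :=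
  eventually_mul_ne_of_cocountable (compl_mem_cocountable L)
    (Nat.cast_ne_zero.mpr (by omega))

lemma analyticOnNhd_P_mul (n : ℕ) :
    AnalyticOnNhd ℂ (fun z ↦ L.weierstrassP (n * z)) {z | (n : ℂ) * z ∈ (L.lattice : Set ℂ)ᶜ} :=
  L.analyticOnNhd_weierstrassP.comp (g := L.weierstrassP) (f := fun z ↦ (n : ℂ) * z)
    (analyticOnNhd_const.mul analyticOnNhd_id) (fun _ hz ↦ hz)

lemma analyticOnNhd_zeta_mul (n : ℕ) :
    AnalyticOnNhd ℂ (fun z ↦ zeta L (n * z)) {z | (n : ℂ) * z ∈ (L.lattice : Set ℂ)ᶜ} :=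
  (analyticOnNhd_zeta L).comp (g := zeta L) (f := fun z ↦ (n : ℂ) * z)
    (analyticOnNhd_const.mul analyticOnNhd_id) (fun _ hz ↦ hz)

lemma tendsto_sq_mul_P_mul (n : ℕ) (hn : 1 ≤ n) :
    Tendsto (fun z ↦ z ^ 2 * L.weierstrassP (n * z)) (𝓝[≠] 0) (𝓝 (1 / (n : ℂ) ^ 2)) := by
  have hn0 : (n : ℂ) ≠ 0 := Nat.cast_ne_zero.mpr (by omega)
  have h1 : Tendsto (fun z : ℂ ↦ (n : ℂ) * z) (𝓝[≠] 0) (𝓝[≠] 0) := by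
    refine tendsto_nhdsWithin_iff.mpr ⟨?_, ?_⟩
    · have : ContinuousAt (fun z : ℂ ↦ (n : ℂ) * z) 0 := by fun_prop
      simpa using this.tendsto.mono_left (nhdsWithin_le_nhds (s := {0}ᶜ))
    · filter_upwards [self_mem_nhdsWithin] with z hz using mul_ne_zero hn0 hz
  refine (((tendsto_sq_mul_P L).comp h1).div_const ((n : ℂ) ^ 2)).congr fun z ↦ ?_
  simp only [Function.comp_apply]
  field_simp

/-- For `n ≥ 2` the functions `℘(n z)` and `℘(z)` have different leading coefficients at `0`. -/
lemma generic_P_mul_ne (n : ℕ) (hn : 2 ≤ n) :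
    ∀ᶠ z in cocountable, L.weierstrassP (n * z) - L.weierstrassP z ≠ 0 := by
  refine generic_ne_zero_of_tendsto
    (inter_mem (mul_mem_cocountable L n (by omega)) (compl_mem_cocountable L))
    (((analyticOnNhd_P_mul L n).mono Set.inter_subset_left).sub
      (L.analyticOnNhd_weierstrassP.mono Set.inter_subset_right)) 2
    (b := 1 / (n : ℂ) ^ 2 - 1) ?_ ?_
  · rw [sub_ne_zero, Ne, div_eq_one_iff_eq (by simp; omega), eq_comm]
    exact_mod_cast (Nat.one_lt_pow two_ne_zero (by omega)).ne'
  · refine ((tendsto_sq_mul_P_mul L n (by omega)).sub (tendsto_sq_mul_P L)).congr fun z ↦ ?_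
    ring

lemma generic_good : ∀ᶠ z in cocountable, Good L z := by
  have h1 : ∀ᶠ z in cocountable, ∀ n : ℕ, 1 ≤ n → (n : ℂ) * z ∉ L.lattice := by
    rw [eventually_countable_forall]
    intro n
    rcases Nat.lt_or_ge n 1 with hn | hn
    · exact .of_forall fun z h ↦ absurd h (by omega)
    · filter_upwards [mul_mem_cocountable L n hn] with z hz _ using hz
  have h2 : ∀ᶠ z in cocountable,
      ∀ n : ℕ, 2 ≤ n → L.weierstrassP (n * z) - L.weierstrassP z ≠ 0 := by
    rw [eventually_countable_forall]
    intro n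
    rcases Nat.lt_or_ge n 2 with hn | hn
    · exact .of_forall fun z h ↦ absurd h (by omega)
    · filter_upwards [generic_P_mul_ne L n hn] with z hz _ using hz
  filter_upwards [h1, generic_P'_ne_zero L, h2] with z a1 a2 a3 using ⟨a1, a2, a3⟩

/-- A field containing `g₂`, `g₃`, `℘(z)` and closed under square roots contains `℘(n z)` and
`ζ(n z) - n ζ(z)`, by the addition and duplication formulas. -/
lemma Good.mem_subfield {z : ℂ} (hz : Good L z) (A : Subfield ℂ) (h2 : L.g₂ ∈ A) (h3 : L.g₃ ∈ A)
    (hP : L.weierstrassP z ∈ A) (hsq : ∀ x, x ^ 2 ∈ A → x ∈ A) (n : ℕ) (hn : 1 ≤ n) :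
    L.weierstrassP (n * z) ∈ A ∧ zeta L (n * z) - n * zeta L z ∈ A := by
  have hP' : ∀ w ∉ L.lattice, L.weierstrassP w ∈ A → L.derivWeierstrassP w ∈ A := by
    intro w hw h
    refine hsq _ ?_
    rw [L.derivWeierstrassP_sq w hw]
    exact sub_mem (sub_mem (mul_mem (ofNat_mem A 4) (pow_mem h 3)) (mul_mem h2 h)) h3
  have hz1 : z ∉ L.lattice := by simpa using hz.notMem 1 le_rfl
  have hPz' := hP' z hz1 hP
  have n2 : (2 : ℂ) ∈ A := ofNat_mem A 2
  have n4 : (4 : ℂ) ∈ A := ofNat_mem A 4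
  have n6 : (6 : ℂ) ∈ A := ofNat_mem A 6
  have n12 : (12 : ℂ) ∈ A := ofNat_mem A 12
  have hP'' : ∀ w, L.weierstrassP w ∈ A → 6 * L.weierstrassP w ^ 2 - L.g₂ / 2 ∈ A := fun w h ↦
    sub_mem (mul_mem n6 (pow_mem h 2)) (div_mem h2 n2)
  induction n, hn using Nat.le_induction with
  | base => simpa using hP
  | succ n hn ih =>
    obtain ⟨ih1, ih2⟩ := ih
    rcases Nat.eq_or_lt_of_le hn with rfl | hn2
    · have h2z : 2 * z ∉ L.lattice := by simpa using hz.notMem 2 (by norm_num)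
      have e : ((1 + 1 : ℕ) : ℂ) = 2 := by norm_num
      rw [e, P_two_mul L hz1 h2z hz.P', zeta_two_mul L hz1 h2z hz.P', add_sub_cancel_left]
      refine ⟨?_, div_mem (div_mem (hP'' z hP) hPz') n2⟩
      exact sub_mem hP (div_mem (div_mem (sub_mem (mul_mem (mul_mem n12 hP) (pow_mem hPz' 2))
        (pow_mem (hP'' z hP) 2)) (pow_mem hPz' 2)) n4)
    · have hnz := hz.notMem n hn
      have e : ((n + 1 : ℕ) : ℂ) * z = n * z + z := by
        push_cast
        ring
      have hnz1 : n * z + z ∉ L.lattice := e ▸ hz.notMem (n + 1) (by omega)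
      have hne := hz.P_sub n hn2
      have hd := sub_mem ih1 hP
      have hd' := sub_mem (hP' _ hnz ih1) hPz'
      rw [e]
      constructor
      · rw [P_add L hnz hz1 hnz1 hne]
        exact sub_mem ih1 (div_mem (div_mem (sub_mem (mul_mem (hP'' _ ih1) hd)
          (mul_mem hd' (hP' _ hnz ih1))) (pow_mem hd 2)) n2)
      · rw [zeta_add L hnz hz1 hnz1 hne]
        have : zeta L (n * z) + zeta L z + (L.derivWeierstrassP (n * z) - L.derivWeierstrassP z) /
            (L.weierstrassP (n * z) - L.weierstrassP z) / 2 - ((n + 1 : ℕ) : ℂ) * zeta L z =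
            (zeta L (n * z) - n * zeta L z) + (L.derivWeierstrassP (n * z) -
              L.derivWeierstrassP z) / (L.weierstrassP (n * z) - L.weierstrassP z) / 2 := by
          push_cast
          ring
        rw [this]
        exact add_mem ih2 (div_mem (div_mem hd' hd) n2)

section Field

variable {k : Type} [Field k] [Algebra k ℂ]

/-- `Good.mem_subfield` applied to the algebraic closure of `k(℘(z))` in `ℂ`. -/
lemma Good.isAlgebraic {z : ℂ} (hz : Good L z) (γ₂ γ₃ : k) (h2 : algebraMap k ℂ γ₂ = L.g₂)
    (h3 : algebraMap k ℂ γ₃ = L.g₃) (n : ℕ) (hn : 1 ≤ n) :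
    IsAlgebraic (IntermediateField.adjoin k {L.weierstrassP z}) (L.weierstrassP (n * z)) ∧
    IsAlgebraic (IntermediateField.adjoin k {L.weierstrassP z})
      (zeta L (n * z) - n * zeta L z) := by
  set E := IntermediateField.adjoin k {L.weierstrassP z}
  have hmem : ∀ y ∈ E, y ∈ (algebraicClosure E ℂ).toSubfield := fun y hy ↦
    mem_algebraicClosure_iff.mpr (isAlgebraic_algebraMap (⟨y, hy⟩ : E))
  obtain ⟨a1, a2⟩ := hz.mem_subfield L (algebraicClosure E ℂ).toSubfield
    (hmem _ (h2 ▸ E.algebraMap_mem γ₂)) (hmem _ (h3 ▸ E.algebraMap_mem γ₃))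
    (hmem _ (IntermediateField.mem_adjoin_simple_self k _))
    (fun x hx ↦ mem_algebraicClosure_iff.mpr
      (IsAlgebraic.of_pow two_pos (mem_algebraicClosure_iff.mp hx))) n hn
  exact ⟨mem_algebraicClosure_iff.mp a1, mem_algebraicClosure_iff.mp a2⟩

/-! ### Specialisation to division points -/

lemma generic_P_ne (a : ℂ) : ∀ᶠ z in cocountable, L.weierstrassP z ≠ a := by
  have := generic_ne_zero_of_tendsto (compl_mem_cocountable L) (f := fun z ↦ L.weierstrassP z - a)
    (L.analyticOnNhd_weierstrassP.sub analyticOnNhd_const) 2 one_ne_zero ?_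
  · filter_upwards [this] with z hz using sub_ne_zero.mp hz
  · have h1 : ContinuousAt (fun z : ℂ ↦ z ^ 2 * a) 0 := by fun_prop
    have h2 := (tendsto_sq_mul_P L).sub (h1.tendsto.mono_left (nhdsWithin_le_nhds (s := {0}ᶜ)))
    simp only [ne_eq, OfNat.ofNat_ne_zero, not_false_eq_true, zero_pow, zero_mul, sub_zero] at h2
    refine h2.congr fun z ↦ ?_
    ring

/-- Specialisation of the relation between `℘(m z)` and `℘(z)` at a point where the former takes a
value in `k`. -/
lemma isAlgebraic_P_div [Countable k] (γ₂ γ₃ a : k) (h2 : algebraMap k ℂ γ₂ = L.g₂)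
    (h3 : algebraMap k ℂ γ₃ = L.g₃) (m : ℕ) (hm : 1 ≤ m) {z₀ : ℂ} (hz₀ : z₀ ∉ L.lattice)
    (hmz₀ : (m : ℂ) * z₀ ∉ L.lattice) (ha : L.weierstrassP (m * z₀) = algebraMap k ℂ a) :
    IsAlgebraic k (L.weierstrassP z₀) := by
  refine isAlgebraic_of_generic
    (inter_mem (mul_mem_cocountable L m hm) (compl_mem_cocountable L))
    ((analyticOnNhd_P_mul L m).mono Set.inter_subset_left)
    (L.analyticOnNhd_weierstrassP.mono Set.inter_subset_right) a ?_ ?_ ⟨hmz₀, hz₀⟩ ha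
  · exact eventually_mul_ne_of_cocountable (generic_P_ne L (algebraMap k ℂ a))
      (Nat.cast_ne_zero.mpr (by omega))
  · filter_upwards [generic_good L] with z hz
    exact exists_bivariate_of_isAlgebraic (hz.isAlgebraic L γ₂ γ₃ h2 h3 m hm).1

/-- Specialisation of the relation between `℘(z)` and `ζ(m z) - m ζ(z)` at a point where `℘(z)` takes
a value in `k`. -/
lemma isAlgebraic_zeta_div [Countable k] (γ₂ γ₃ a : k) (h2 : algebraMap k ℂ γ₂ = L.g₂)
    (h3 : algebraMap k ℂ γ₃ = L.g₃) (m : ℕ) (hm : 1 ≤ m) {z₀ : ℂ} (hz₀ : z₀ ∉ L.lattice)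
    (hmz₀ : (m : ℂ) * z₀ ∉ L.lattice) (ha : L.weierstrassP z₀ = algebraMap k ℂ a) :
    IsAlgebraic k (zeta L (m * z₀) - m * zeta L z₀) := by
  refine isAlgebraic_of_generic (g := fun z ↦ zeta L (m * z) - m * zeta L z)
    (inter_mem (mul_mem_cocountable L m hm) (compl_mem_cocountable L))
    (L.analyticOnNhd_weierstrassP.mono Set.inter_subset_right)
    (((analyticOnNhd_zeta_mul L m).mono Set.inter_subset_left).sub
      (analyticOnNhd_const.mul ((analyticOnNhd_zeta L).mono Set.inter_subset_right)))
    a (generic_P_ne L _) ?_ ⟨hmz₀, hz₀⟩ ha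
  filter_upwards [generic_good L] with z hz
  exact exists_bivariate_swap
    (exists_bivariate_of_isAlgebraic (hz.isAlgebraic L γ₂ γ₃ h2 h3 m hm).2)

end Field

end DivisionValues

/-- **Division values.** For `p ∈ ℂ ∖ Ω` and an integer `m ≥ 1`, the numbers `℘(p/m)` and
`ζ(p/m) − ζ(p)/m` are algebraic over the field `ℚ(g₂, g₃, ℘(p))`. -/
theorem division_values_algebraic (ω₁ ω₂ : ℂ) (hΩ : IsLatticeBasis ω₁ ω₂)
    (p : ℂ) (hp : p ∉ LatticePts ω₁ ω₂) (m : ℕ) (hm : 1 ≤ m) :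
    IsAlgebraic (IntermediateField.adjoin ℚ ({g2 ω₁ ω₂, g3 ω₁ ω₂, wP ω₁ ω₂ p} : Set ℂ))
        (wP ω₁ ω₂ (p / m)) ∧
      IsAlgebraic (IntermediateField.adjoin ℚ ({g2 ω₁ ω₂, g3 ω₁ ω₂, wP ω₁ ω₂ p} : Set ℂ))
        (wZeta ω₁ ω₂ (p / m) - wZeta ω₁ ω₂ p / m) := by
  let L : PeriodPair := ⟨ω₁, ω₂, hΩ⟩
  have hm0 : (m : ℂ) ≠ 0 := Nat.cast_ne_zero.mpr (by omega)
  have hp' : p ∉ L.lattice := fun h ↦ hp ((DivisionValues.mem_latticePts_iff L).mpr h)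
  have hmp : (m : ℂ) * (p / m) = p := by field_simp
  have hmz₀ : (m : ℂ) * (p / m) ∉ L.lattice := by rwa [hmp]
  have hz₀ : p / m ∉ L.lattice := fun h ↦ hmz₀ (by
    simpa using L.lattice.smul_mem (m : ℤ) h)
  have e1 : wP ω₁ ω₂ (p / m) = L.weierstrassP (p / m) := DivisionValues.wP_eq L hz₀
  have e2 : wP ω₁ ω₂ p = L.weierstrassP p := DivisionValues.wP_eq L hp'
  have e3 : wZeta ω₁ ω₂ (p / m) = DivisionValues.zeta L (p / m) := DivisionValues.wZeta_eq L hz₀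
  have e4 : wZeta ω₁ ω₂ p = DivisionValues.zeta L p := DivisionValues.wZeta_eq L hp'
  have e5 : g2 ω₁ ω₂ = L.g₂ := DivisionValues.g2_eq L
  have e6 : g3 ω₁ ω₂ = L.g₃ := DivisionValues.g3_eq L
  rw [e1, e2, e3, e4, e5, e6]
  set K := IntermediateField.adjoin ℚ ({L.g₂, L.g₃, L.weierstrassP p} : Set ℂ)
  have hsub : ({L.g₂, L.g₃, L.weierstrassP p} : Set ℂ) ⊆ K := IntermediateField.subset_adjoin ℚ _
  have hK : Countable K := by
    refine Cardinal.mk_le_aleph0_iff.mp ((IntermediateField.cardinalMk_adjoin_le ℚ _).trans ?_)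
    refine sup_le (sup_le Cardinal.mk_le_aleph0 ?_) le_rfl
    exact Cardinal.le_aleph0_iff_set_countable.mpr (Set.to_countable _)
  let γ₂ : K := ⟨L.g₂, hsub (by simp)⟩
  let γ₃ : K := ⟨L.g₃, hsub (by simp)⟩
  let a : K := ⟨L.weierstrassP p, hsub (by simp)⟩
  have h1 : IsAlgebraic K (L.weierstrassP (p / m)) :=
    DivisionValues.isAlgebraic_P_div L γ₂ γ₃ a rfl rfl m hm hz₀ hmz₀ (by rw [hmp]; rfl)
  refine ⟨h1, ?_⟩
  -- `℘(p / m)` lies in the algebraic closure of `K`, which is again countable, so the second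
  -- specialisation may be carried out over it
  let K' := algebraicClosure K ℂ
  have hK' : Countable K' := by
    refine Cardinal.mk_le_aleph0_iff.mp
      ((Algebra.IsAlgebraic.cardinalMk_le_max K K').trans ?_)
    exact max_le Cardinal.mk_le_aleph0 le_rfl
  have h2 : IsAlgebraic K' (DivisionValues.zeta L (m * (p / m)) -
      m * DivisionValues.zeta L (p / m)) :=
    DivisionValues.isAlgebraic_zeta_div L (algebraMap K K' γ₂) (algebraMap K K' γ₃)
      (⟨L.weierstrassP (p / m), mem_algebraicClosure_iff.mpr h1⟩ : K') rfl rfl m hm hz₀ hmz₀ rfl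
  have h3 : IsAlgebraic K (DivisionValues.zeta L (m * (p / m)) -
      m * DivisionValues.zeta L (p / m)) := h2.restrictScalars K
  rw [hmp] at h3
  have h4 : IsAlgebraic K (m : ℂ) := isAlgebraic_natCast m
  have h5 : DivisionValues.zeta L (p / m) - DivisionValues.zeta L p / m =
      -((DivisionValues.zeta L p - m * DivisionValues.zeta L (p / m)) * (m : ℂ)⁻¹) := by
    field_simp
    ring
  rw [h5]
  exact (h3.mul h4.inv).neg
end
end

section
/- Let Ω be a lattice in ℂ with Weierstrass functions ℘, ζ, quasi-periods η(ω), and invariants g₂, g₃. Let ω ∈ Ω and let m ≥ 1 be an integer such that ω/m ∉ Ω. Then the two complex numbers ℘(ω/m) and ζ(ω/m) − η(ω)/m are algebraic over the field ℚ(g₂, g₃). -/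
/-! Write `L` for the lattice, `K = ℚ(g₂, g₃)` and `u = ω / m`, so that `mu` is a lattice point
and `u` is not.

The logarithmic derivative of the sigma product gives the usual series for `ζ` (`wZeta_eq`), so `℘`
is Mathlib's `PeriodPair.weierstrassP` off the lattice (`wP_eq`), and the Weierstrass equation is
available. Liouville's theorem yields the addition formula
`ζ(z + w) - ζ(z) - ζ(w) = (℘'(z) - ℘'(w)) / (2 (℘(z) - ℘(w)))` (`addition_formula`) and, in the limit
`w → z`, the duplication formula. Since `℘'² = 4℘³ - g₂℘ - g₃` and `℘'' = 6℘² - g₂ / 2`, the ring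
`K[℘, ℘']` is closed under differentiation, and by induction on `k` the functions `ζ(kz) - k ζ(z)`
and `℘(kz)` belong to its fraction field (`isRat_zeta_mul_sub`, `IsRat.weierstrassP_mul`).

*Algebraicity of `℘(u)`.* Write `℘(mz) = p / q` with `p, q ∈ K[℘, ℘']`. The left side has a pole at
`u`, so `q(u) = 0`. The norm `q(z) q(-z)` of `q` is a nonzero polynomial in `℘(z)` over `K`, with root
`℘(u)` (`isAlgebraic_weierstrassP_torsion`). It follows that `℘'(u)`, and with it every element of
`K[℘, ℘']`, takes an algebraic value at `u`.

*Algebraicity of `ζ(u) - η(ω) / m`.* The function `h(z) = ζ((m + 1)z) - (m + 1) ζ(z)` is analytic at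
`u`, and `h(u) = ζ(u + ω) - ζ(u) - m ζ(u) = η(ω) - m ζ(u)`. Write `q h = p` with `p, q ∈ K[℘, ℘']`.
If `q` vanishes to order `r` at `u`, comparing `r`-th derivatives gives `h(u) = p⁽ʳ⁾(u) / q⁽ʳ⁾(u)`, a
quotient of algebraic numbers (`isAlgebraic_zeta_torsion`). -/

open Complex

noncomputable section

namespace TorsionValues

open Filter Topology Polynomial

/-! ### The Weierstrass zeta function as a series -/

section

variable (L : PeriodPair)

/-- The Weierstrass zeta function of the lattice of `L` without its principal part `1 / z` at the
origin: `∑_{l ≠ 0} (1 / (z - l) + 1 / l + z / l²)`. It is holomorphic off the nonzero lattice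
points. -/
def zetaReg (z : ℂ) : ℂ :=
  ∑' l : L.lattice, if l.1 = 0 then 0 else (1 / (z - l) + 1 / l + z / (l : ℂ) ^ 2)

/-- The Weierstrass zeta function of the lattice of `L`, as its Mittag-Leffler series. At `z = 0`,
where it has a pole, the value is junk. -/
def zeta (z : ℂ) : ℂ := 1 / z + zetaReg L z

/-- The summands of `zetaReg` are `O(‖l‖⁻³)`, uniformly on a disc of radius `r`. -/
lemma zeta_bound (r : ℝ) (s : ℂ) (hs : ‖s‖ < r) (l : ℂ) (h : 2 * r ≤ ‖l‖) :
    ‖1 / (s - l) + 1 / l + s / l ^ 2‖ ≤ 2 * r ^ 2 * ‖l‖ ^ (-3 : ℝ) := by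
  have hr : 0 < r := (norm_nonneg _).trans_lt hs
  have hl : 0 < ‖l‖ := by linarith
  have hl0 : l ≠ 0 := norm_pos_iff.mp hl
  have hsl : ‖l‖ / 2 ≤ ‖s - l‖ := by
    rw [norm_sub_rev]; exact .trans (by linarith) (norm_sub_norm_le l s)
  have hsl0 : s - l ≠ 0 := norm_pos_iff.mp (by linarith)
  have e : 1 / (s - l) + 1 / l + s / l ^ 2 = s ^ 2 / ((s - l) * l ^ 2) := by
    field_simp; ring
  rw [e, norm_div, norm_mul, norm_pow, norm_pow]
  calc _ ≤ r ^ 2 / (‖l‖ / 2 * ‖l‖ ^ 2) := by gcongr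
    _ = 2 * r ^ 2 / ‖l‖ ^ 3 := by field
    _ = _ := by norm_cast

lemma hasSumLocallyUniformly_zetaReg :
    HasSumLocallyUniformly
      (fun (l : L.lattice) (z : ℂ) ↦ if l.1 = 0 then 0 else
        (1 / (z - l) + 1 / l + z / (l : ℂ) ^ 2)) (zetaReg L) := by
  refine L.hasSumLocallyUniformly_aux (u := (2 * · ^ 2 * ‖·‖ ^ (-3 : ℝ))) _
    (fun _ _ ↦ (ZLattice.summable_norm_rpow _ _ (by simp; norm_num)).mul_left _) fun r hr ↦
    Filter.eventually_atTop.mpr ⟨2 * r, ?_⟩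
  rintro _ h s hs l rfl
  split_ifs
  · simpa using! show 0 ≤ 2 * r ^ 2 * (‖↑l‖ ^ 3)⁻¹ by positivity
  · exact zeta_bound r s hs l h

lemma hasDerivAt_zetaSummand {z l : ℂ} (h : z ≠ l) :
    HasDerivAt (fun z ↦ 1 / (z - l) + 1 / l + z / l ^ 2) (-(1 / (z - l) ^ 2 - 1 / l ^ 2)) z := by
  have h' : z - l ≠ 0 := sub_ne_zero.mpr h
  have h1 : HasDerivAt (fun z ↦ z - l) 1 z := (hasDerivAt_id z).sub_const l
  have := ((h1.inv h').add_const (1 / l)).add ((hasDerivAt_id z).div_const (l ^ 2))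
  convert! this using 1
  · ext; simp
  · ring

lemma summand_ne {z : ℂ} (hz : z ∈ ((L.lattice : Set ℂ) \ {0})ᶜ) {l : L.lattice} (hl : l.1 ≠ 0) :
    z ≠ l := by
  rintro rfl; simp_all

lemma differentiableOn_zetaReg : DifferentiableOn ℂ (zetaReg L) ((L.lattice : Set ℂ) \ {0})ᶜ := by
  refine (hasSumLocallyUniformly_zetaReg L).hasSumLocallyUniformlyOn.differentiableOn
    (.of_forall fun s ↦ .fun_sum fun i hi ↦ ?_) L.isOpen_compl_lattice_sdiff
  split_ifs with h
  · fun_prop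
  · exact fun z hz ↦
      (hasDerivAt_zetaSummand (summand_ne L hz h)).differentiableAt.differentiableWithinAt

lemma deriv_zetaReg {z : ℂ} (hz : z ∈ ((L.lattice : Set ℂ) \ {0})ᶜ) :
    deriv (zetaReg L) z = - L.weierstrassPExcept 0 z := by
  have key : Set.EqOn (deriv (zetaReg L)) (fun z ↦ - L.weierstrassPExcept 0 z)
      ((L.lattice : Set ℂ) \ {0})ᶜ := by
    refine ((hasSumLocallyUniformly_zetaReg L).tendstoLocallyUniformlyOn.deriv
      (.of_forall fun s ↦ ?_) L.isOpen_compl_lattice_sdiff).unique ?_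
    · refine .fun_sum fun i hi ↦ ?_
      split_ifs with h
      · fun_prop
      · exact fun z hz ↦
          (hasDerivAt_zetaSummand (summand_ne L hz h)).differentiableAt.differentiableWithinAt
    · refine (L.hasSumLocallyUniformly_weierstrassPExcept 0).tendstoLocallyUniformlyOn.neg.congr ?_
      intro s z hz
      have : HasDerivAt (fun z ↦ ∑ l ∈ s, if l.1 = 0 then 0 else
          (1 / (z - l) + 1 / l + z / (l : ℂ) ^ 2))
          (∑ l ∈ s, if l.1 = 0 then 0 else -(1 / (z - l) ^ 2 - 1 / (l : ℂ) ^ 2)) z := by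
        refine HasDerivAt.fun_sum fun l _ ↦ ?_
        split_ifs with h
        · exact hasDerivAt_const _ _
        · exact hasDerivAt_zetaSummand (summand_ne L hz h)
      simp only [Function.comp_apply, Pi.neg_apply]
      rw [this.deriv, ← Finset.sum_neg_distrib]
      refine Finset.sum_congr rfl fun l _ ↦ ?_
      split_ifs <;> simp
  exact key hz

lemma zetaReg_zero : zetaReg L 0 = 0 := by
  rw [zetaReg, ← tsum_zero (β := L.lattice)]
  congr with l
  split_ifs <;> simp

lemma analyticAt_zetaReg_zero : AnalyticAt ℂ (zetaReg L) 0 :=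
  (differentiableOn_zetaReg L).analyticAt (L.compl_lattice_sdiff_singleton_mem_nhds 0)

lemma ne_zero_of_notMem {z : ℂ} (hz : z ∉ L.lattice) : z ≠ 0 := by
  rintro rfl; exact hz (zero_mem _)

lemma hasDerivAt_zeta {z : ℂ} (hz : z ∉ L.lattice) :
    HasDerivAt (zeta L) (- L.weierstrassP z) z := by
  have hz0 := ne_zero_of_notMem L hz
  have hz' : z ∈ ((L.lattice : Set ℂ) \ {0})ᶜ := by simp [hz]
  have h1 : HasDerivAt (zetaReg L) (- L.weierstrassPExcept 0 z) z := by
    rw [← deriv_zetaReg L hz']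
    exact ((differentiableOn_zetaReg L).differentiableAt
      (L.isOpen_compl_lattice_sdiff.mem_nhds hz')).hasDerivAt
  have := (hasDerivAt_inv hz0).add h1
  have e := L.weierstrassPExcept_add 0 z
  convert! this using 1
  · ext; simp [zeta]
  · rw [← e]; simp

lemma zeta_analyticAt {z : ℂ} (hz : z ∉ L.lattice) : AnalyticAt ℂ (zeta L) z :=
  DifferentiableOn.analyticAt (s := (L.lattice : Set ℂ)ᶜ)
    (fun _ hx ↦ (hasDerivAt_zeta L hx).differentiableAt.differentiableWithinAt)
    (L.isClosed_lattice.isOpen_compl.mem_nhds hz)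

end

/-! ### The sigma product and its logarithmic derivative -/

section

variable (L : PeriodPair)

lemma mem_latticePts_iff {z : ℂ} : z ∈ LatticePts L.ω₁ L.ω₂ ↔ z ∈ L.lattice := by
  rw [PeriodPair.mem_lattice]
  simp only [LatticePts, Set.mem_ofPred_eq, eq_comm]

/-- The inclusion of the nonzero points of `ℤω₁ + ℤω₂` into the lattice of `L`. -/
def toLattice (w : LatticePts' L.ω₁ L.ω₂) : L.lattice := ⟨w.1, (mem_latticePts_iff L).1 w.2.1⟩

lemma toLattice_injective : Function.Injective (toLattice L) := fun _ _ h ↦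
  Subtype.ext (congrArg (fun x : L.lattice ↦ (x : ℂ)) h)

lemma mem_range_toLattice {l : L.lattice} (hl : l.1 ≠ 0) : l ∈ Set.range (toLattice L) :=
  ⟨⟨l.1, (mem_latticePts_iff L).2 l.2, hl⟩, rfl⟩

lemma tsum_toLattice (f : ℂ → ℂ) (hf : f 0 = 0) :
    ∑' w : LatticePts' L.ω₁ L.ω₂, f w = ∑' l : L.lattice, f l := by
  refine (toLattice_injective L).tsum_eq (f := fun l : L.lattice ↦ f l) fun l hl ↦ ?_
  refine mem_range_toLattice L fun h ↦ hl ?_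
  simp only [h, hf]

lemma g2_eq : g2 L.ω₁ L.ω₂ = L.g₂ := by
  rw [g2, PeriodPair.g₂, PeriodPair.G, tsum_toLattice L (fun z ↦ (z ^ 4)⁻¹) (by simp)]

lemma g3_eq : g3 L.ω₁ L.ω₂ = L.g₃ := by
  rw [g3, PeriodPair.g₃, PeriodPair.G, tsum_toLattice L (fun z ↦ (z ^ 6)⁻¹) (by simp)]

/-- The Weierstrass elementary factor `(1 - x) exp (x + x² / 2)` of genus two. -/
def elemFactor (x : ℂ) : ℂ := (1 - x) * exp (x + x ^ 2 / 2)

lemma hasDerivAt_elemFactor (x : ℂ) :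
    HasDerivAt elemFactor (-x ^ 2 * exp (x + x ^ 2 / 2)) x := by
  have h1 : HasDerivAt (fun x : ℂ ↦ x + x ^ 2 / 2) (1 + x) x := by
    convert! (hasDerivAt_id x).add ((hasDerivAt_pow 2 x).div_const 2) using 1
    norm_num
  have := ((hasDerivAt_id x).const_sub 1).mul h1.cexp
  convert! this using 1
  simp only [id]; ring

/-- Follows from the mean value inequality: the derivative of `elemFactor` is `O(x²)`. -/
lemma norm_elemFactor_sub_one_le {x : ℂ} (hx : ‖x‖ ≤ 1) :
    ‖elemFactor x - 1‖ ≤ Real.exp 2 * ‖x‖ ^ 3 := by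
  have hbound : ∀ y ∈ Metric.closedBall (0 : ℂ) ‖x‖,
      ‖-y ^ 2 * exp (y + y ^ 2 / 2)‖ ≤ ‖x‖ ^ 2 * Real.exp 2 := by
    intro y hy
    have hy : ‖y‖ ≤ ‖x‖ := by simpa using hy
    rw [norm_mul, norm_neg, norm_pow, norm_exp]
    gcongr
    calc _ ≤ ‖y + y ^ 2 / 2‖ := re_le_norm _
      _ ≤ ‖y‖ + ‖y‖ ^ 2 / 2 := (norm_add_le _ _).trans (by simp)
      _ ≤ 2 := by nlinarith [norm_nonneg y]
  have := (convex_closedBall (0 : ℂ) ‖x‖).norm_image_sub_le_of_norm_hasDerivWithin_le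
    (fun y _ ↦ (hasDerivAt_elemFactor y).hasDerivWithinAt) hbound
    (x := 0) (y := x) (by simp) (by simp)
  simp only [elemFactor, sub_zero] at this ⊢
  calc _ = _ := by simp
    _ ≤ _ := this
    _ = _ := by ring

lemma summable_inv_cube :
    Summable fun w : LatticePts' L.ω₁ L.ω₂ ↦ ‖(w : ℂ)‖ ^ (-3 : ℝ) := by
  have h0 : (-3 : ℝ) < -Module.finrank ℤ L.lattice := by simp; norm_num
  have h : Summable fun l : L.lattice ↦ ‖l‖ ^ (-3 : ℝ) :=
    ZLattice.summable_norm_rpow L.lattice (-3) h0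
  have h2 := h.comp_injective (toLattice_injective L)
  refine h2.congr fun w ↦ ?_
  simp only [Function.comp_apply, toLattice, Submodule.coe_norm]

lemma eventually_norm_ge (r : ℝ) (hr : 0 < r) :
    ∀ᶠ w : LatticePts' L.ω₁ L.ω₂ in cofinite, r ≤ ‖(w : ℂ)‖ := by
  have := (summable_inv_cube L).tendsto_cofinite_zero.eventually
    (gt_mem_nhds (show 0 < r ^ (-3 : ℝ) by positivity))
  filter_upwards [this] with w hw
  by_contra! h
  have hw0 : 0 < ‖(w : ℂ)‖ := norm_pos_iff.2 w.2.2
  exact absurd hw (not_lt.2 (Real.rpow_le_rpow_of_nonpos hw0 h.le (by norm_num)))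

lemma eventually_elemFactor_bound (r : ℝ) (hr : 0 < r) :
    ∀ᶠ w : LatticePts' L.ω₁ L.ω₂ in cofinite, ∀ z ∈ Metric.ball (0 : ℂ) r,
      ‖elemFactor (z / w) - 1‖ ≤ Real.exp 2 * r ^ 3 * ‖(w : ℂ)‖ ^ (-3 : ℝ) := by
  filter_upwards [eventually_norm_ge L r hr] with w hw z hz
  have hz : ‖z‖ < r := by simpa using hz
  have hw0 : 0 < ‖(w : ℂ)‖ := norm_pos_iff.2 w.2.2
  have h1 : ‖z / (w : ℂ)‖ ≤ 1 := by rw [norm_div]; exact (div_le_one hw0).2 (hz.le.trans hw)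
  refine (norm_elemFactor_sub_one_le h1).trans ?_
  have : ‖(w : ℂ)‖ ^ (-3 : ℝ) = (‖(w : ℂ)‖ ^ 3)⁻¹ := by
    rw [Real.rpow_neg hw0.le]; norm_cast
  rw [norm_div, div_pow, this, mul_assoc, div_eq_mul_inv]
  gcongr

lemma summable_elemBound (r : ℝ) :
    Summable fun w : LatticePts' L.ω₁ L.ω₂ ↦ Real.exp 2 * r ^ 3 * ‖(w : ℂ)‖ ^ (-3 : ℝ) :=
  (summable_inv_cube L).mul_left _

lemma elemFactor_differentiable (w : ℂ) : Differentiable ℂ fun z ↦ elemFactor (z / w) := by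
  unfold elemFactor; fun_prop

/-- Local uniform convergence of the product that defines `σ`. -/
lemma hasProd_elemFactor (r : ℝ) (hr : 0 < r) :
    HasProdLocallyUniformlyOn (fun (w : LatticePts' L.ω₁ L.ω₂) z ↦ elemFactor (z / w))
      (fun z ↦ ∏' w : LatticePts' L.ω₁ L.ω₂, elemFactor (z / w)) (Metric.ball 0 r) := by
  have := Summable.hasProdLocallyUniformlyOn_one_add (K := Metric.ball (0 : ℂ) r)
    (f := fun (w : LatticePts' L.ω₁ L.ω₂) z ↦ elemFactor (z / w) - 1)
    Metric.isOpen_ball (summable_elemBound L r) (eventually_elemFactor_bound L r hr)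
    (fun w ↦ ((elemFactor_differentiable w).continuous.sub continuous_const).continuousOn)
  simpa using this

lemma elemFactor_ne_zero {x : ℂ} (hx : x ≠ 1) : elemFactor x ≠ 0 :=
  mul_ne_zero (sub_ne_zero.2 hx.symm) (exp_ne_zero _)

lemma logDeriv_elemFactor {z w : ℂ} (hw : w ≠ 0) (h : z ≠ w) :
    logDeriv (fun z ↦ elemFactor (z / w)) z = 1 / (z - w) + 1 / w + z / w ^ 2 := by
  have h1 : HasDerivAt (fun z ↦ elemFactor (z / w))
      (-(z / w) ^ 2 * exp (z / w + (z / w) ^ 2 / 2) * (1 / w)) z :=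
    HasDerivAt.comp z (h₂ := elemFactor) (h := fun z ↦ z / w) (hasDerivAt_elemFactor (z / w))
      ((hasDerivAt_id z).div_const w)
  have h2 : z - w ≠ 0 := sub_ne_zero.2 h
  have h3 : (1 - z / w) ≠ 0 := by
    rw [one_sub_div hw]; exact div_ne_zero (sub_ne_zero.2 h.symm) hw
  rw [logDeriv_apply, h1.deriv, elemFactor]
  have h4 := exp_ne_zero (z / w + (z / w) ^ 2 / 2)
  have h5 : w - z ≠ 0 := sub_ne_zero.2 h.symm
  rw [one_sub_div hw]
  field_simp
  ring

/-- The logarithmic derivative of the sigma product is the Mittag-Leffler series: logarithmic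
differentiation of the product term by term is legitimate because of `hasProd_elemFactor`. -/
lemma wZeta_eq {z : ℂ} (hz : z ∉ L.lattice) : wZeta L.ω₁ L.ω₂ z = zeta L z := by
  have hz0 := ne_zero_of_notMem L hz
  have hzw : ∀ w : LatticePts' L.ω₁ L.ω₂, z ≠ w := by
    rintro w rfl
    exact hz ((mem_latticePts_iff L).1 w.2.1)
  have hr : 0 < ‖z‖ + 1 := by positivity
  have hzr : z ∈ Metric.ball (0 : ℂ) (‖z‖ + 1) := by simp
  have hprod := hasProd_elemFactor L _ hr
  set P : ℂ → ℂ := fun z ↦ ∏' w : LatticePts' L.ω₁ L.ω₂, elemFactor (z / w) with hP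
  have hsig : wSigma L.ω₁ L.ω₂ = fun z ↦ z * P z := by
    ext z
    simp only [wSigma, hP, elemFactor]
    congr 2
    ext w
    congr 2
    ring
  have hne : ∀ w : LatticePts' L.ω₁ L.ω₂, elemFactor (z / w) ≠ 0 := fun w ↦
    elemFactor_ne_zero fun h ↦ hzw w ((div_eq_one_iff_eq w.2.2).1 h)
  have hPne : P z ≠ 0 := by
    have := tprod_one_add_ne_zero_of_summable
      (f := fun w : LatticePts' L.ω₁ L.ω₂ ↦ elemFactor (z / w) - 1) (by simpa using hne) ?_
    · simpa using this
    · refine Summable.of_norm_bounded_eventually (summable_elemBound L (‖z‖ + 1)) ?_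
      filter_upwards [eventually_elemFactor_bound L _ hr] with w hw
      simpa using hw z hzr
  have hPd : DifferentiableAt ℂ P z := by
    rw [hasProdLocallyUniformlyOn_iff_tendstoLocallyUniformlyOn] at hprod
    exact (hprod.differentiableOn (.of_forall fun s ↦ by
      refine DifferentiableOn.fun_finsetProd fun w _ ↦
        (elemFactor_differentiable _).differentiableOn)
      Metric.isOpen_ball).differentiableAt (Metric.isOpen_ball.mem_nhds hzr)
  have hld : ∀ w : LatticePts' L.ω₁ L.ω₂, logDeriv (fun z ↦ elemFactor (z / w)) z =
      1 / (z - w) + 1 / w + z / (w : ℂ) ^ 2 := fun w ↦ logDeriv_elemFactor w.2.2 (hzw w)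
  have hsum : HasSum (fun l : L.lattice ↦ if l.1 = 0 then 0 else
        (1 / (z - l) + 1 / l + z / (l : ℂ) ^ 2)) (zetaReg L z) :=
    (hasSumLocallyUniformly_zetaReg L).hasSum
  have hsum' : HasSum (fun w : LatticePts' L.ω₁ L.ω₂ ↦
      1 / (z - w) + 1 / w + z / (w : ℂ) ^ 2) (zetaReg L z) := by
    have := (toLattice_injective L).hasSum_iff (fun l hl ↦ by
      rw [if_pos]
      by_contra h
      exact hl (mem_range_toLattice L h)) |>.2 hsum
    refine this.congr_fun ?_
    intro w
    simp [toLattice, w.2.2]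
  have key : logDeriv P z = zetaReg L z := by
    rw [hP, logDeriv_tprod_eq_tsum Metric.isOpen_ball hzr hne
      (fun w ↦ (elemFactor_differentiable _).differentiableOn) ?_
      hprod.multipliableLocallyUniformlyOn hPne]
    · simp only [hld]; exact hsum'.tsum_eq
    · simp only [hld]; exact hsum'.summable
  rw [wZeta, ← logDeriv_apply, hsig, logDeriv_mul (f := fun z ↦ z) z hz0 hPne
    differentiableAt_fun_id hPd, key, zeta]
  simp

lemma wP_eq {z : ℂ} (hz : z ∉ L.lattice) : wP L.ω₁ L.ω₂ z = L.weierstrassP z := by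
  have : wZeta L.ω₁ L.ω₂ =ᶠ[𝓝 z] zeta L := by
    filter_upwards [L.isClosed_lattice.isOpen_compl.mem_nhds hz] with x hx using wZeta_eq L hx
  rw [wP, this.deriv_eq, (hasDerivAt_zeta L hz).deriv, neg_neg]

end

/-! ### Quasi-periods and Liouville's theorem -/

section

variable (L : PeriodPair)

lemma isOpen_compl : IsOpen ((L.lattice : Set ℂ)ᶜ) := L.isClosed_lattice.isOpen_compl

lemma isPreconnected_compl : IsPreconnected ((L.lattice : Set ℂ)ᶜ) := by
  refine (Set.Countable.isConnected_compl_of_one_lt_rank (by simp) ?_).2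
  have : Countable L.lattice := countable_of_Lindelof_of_discrete (X := L.lattice)
  exact Set.to_countable _

lemma eventually_notMem (z : ℂ) : ∀ᶠ x in 𝓝[≠] z, x ∉ L.lattice := by
  have := L.compl_lattice_sdiff_singleton_mem_nhds z
  filter_upwards [nhdsWithin_le_nhds this, self_mem_nhdsWithin] with x hx hx'
  simp_all

lemma eventually_affine_notMem (k w z : ℂ) (hk : k ≠ 0) :
    ∀ᶠ x in 𝓝[≠] z, k * x + w ∉ L.lattice := by
  have : Tendsto (fun x ↦ k * x + w) (𝓝[≠] z) (𝓝[≠] (k * z + w)) := by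
    refine tendsto_nhdsWithin_iff.2 ⟨(by fun_prop : Continuous fun x ↦ k * x + w
      ).continuousAt.tendsto.mono_left nhdsWithin_le_nhds, ?_⟩
    filter_upwards [self_mem_nhdsWithin] with x hx
    simpa [hk] using hx
  exact this.eventually (eventually_notMem L _)

lemma add_notMem {z l : ℂ} (hz : z ∉ L.lattice) (hl : l ∈ L.lattice) : z + l ∉ L.lattice :=
  fun h ↦ hz ((Submodule.add_mem_iff_left _ hl).1 h)

lemma neg_notMem {z : ℂ} (hz : z ∉ L.lattice) : -z ∉ L.lattice :=
  fun h ↦ hz (neg_mem_iff.1 h)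

lemma basepoint_notMem : (L.ω₁ + L.ω₂) / 3 ∉ L.lattice := by
  have := (L.mul_ω₁_add_mul_ω₂_mem_lattice (α := 1 / 3) (β := 1 / 3)).not.mpr (by norm_num)
  have e : (L.ω₁ + L.ω₂) / 3 = ((1 / 3 : ℚ) : ℂ) * L.ω₁ + ((1 / 3 : ℚ) : ℂ) * L.ω₂ := by
    push_cast; ring
  rwa [e]

lemma weierstrassP_add {z l : ℂ} (hl : l ∈ L.lattice) :
    L.weierstrassP (z + l) = L.weierstrassP z := L.weierstrassP_add_coe z ⟨l, hl⟩

lemma derivWeierstrassP_add {z l : ℂ} (hl : l ∈ L.lattice) :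
    L.derivWeierstrassP (z + l) = L.derivWeierstrassP z := L.derivWeierstrassP_add_coe z ⟨l, hl⟩

lemma hasDerivAt_weierstrassP {z : ℂ} (hz : z ∉ L.lattice) :
    HasDerivAt L.weierstrassP (L.derivWeierstrassP z) z := by
  rw [← L.deriv_weierstrassP]
  exact (L.analyticOnNhd_weierstrassP z hz).differentiableAt.hasDerivAt

/-- The quasi-period does not depend on the base point. -/
lemma zeta_add_sub {z w l : ℂ} (hz : z ∉ L.lattice) (hw : w ∉ L.lattice) (hl : l ∈ L.lattice) :
    zeta L (z + l) - zeta L z = zeta L (w + l) - zeta L w := by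
  have hd : ∀ x ∈ (L.lattice : Set ℂ)ᶜ,
      HasDerivAt (fun x ↦ zeta L (x + l) - zeta L x) 0 x := by
    intro x hx
    have h1 := (hasDerivAt_zeta L (add_notMem L hx hl)).comp_add_const x l
    have := h1.sub (hasDerivAt_zeta L hx)
    rwa [weierstrassP_add L hl, sub_self] at this
  exact (isOpen_compl L).is_const_of_deriv_eq_zero (isPreconnected_compl L)
    (fun x hx ↦ (hd x hx).differentiableAt.differentiableWithinAt)
    (fun x hx ↦ (hd x hx).deriv) hz hw

lemma wEta_eq {l z : ℂ} (hl : l ∈ L.lattice) (hz : z ∉ L.lattice) :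
    wEta L.ω₁ L.ω₂ l = zeta L (z + l) - zeta L z := by
  rw [wEta, wZeta_eq L (basepoint_notMem L), wZeta_eq L (add_notMem L (basepoint_notMem L) hl)]
  exact zeta_add_sub L (basepoint_notMem L) hz hl

/-- **Liouville's theorem** for elliptic functions without poles. `D` is only required to agree
near each point with an analytic function on a *punctured* neighbourhood, because the junk values of
`℘` and `zeta` at their poles make `D` discontinuous there; hence the conclusion is about the points
of continuity of `D`. -/
lemma liouville_periodic {D : ℂ → ℂ}
    (hD : ∀ z₀, ∃ g, AnalyticAt ℂ g z₀ ∧ D =ᶠ[𝓝[≠] z₀] g)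
    (hper : ∀ l ∈ L.lattice, ∀ z, ∀ᶠ x in 𝓝[≠] z, D (x + l) = D x) :
    ∃ c, ∀ z, ContinuousAt D z → D z = c := by
  choose g hg hDg using hD
  -- The local extensions glue to the entire function `z ↦ g z z`, which is periodic.
  have key : ∀ z₀, (fun z ↦ g z z) =ᶠ[𝓝 z₀] g z₀ := by
    intro z₀
    refine eventuallyEq_nhds_of_eventuallyEq_nhdsNE ?_ rfl
    have h1 : ∀ᶠ z in 𝓝 z₀, AnalyticAt ℂ (g z₀) z := (hg z₀).eventually_analyticAt
    filter_upwards [eventually_nhdsNE_eventually_nhds_iff.2 (hDg z₀), nhdsWithin_le_nhds h1]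
      with z hz hz'
    refine tendsto_nhds_unique (f := D) (l := 𝓝[≠] z) ?_ ?_
    · exact ((hg z).continuousAt.tendsto.mono_left nhdsWithin_le_nhds).congr' (hDg z).symm
    · refine (hz'.continuousAt.tendsto.mono_left nhdsWithin_le_nhds).congr' ?_
      filter_upwards [nhdsWithin_le_nhds hz] with x hx using hx.symm
  have hdiff : Differentiable ℂ fun z ↦ g z z := fun z ↦
    ((hg z).congr (key z).symm).differentiableAt
  have heq : ∀ z, ContinuousAt D z → D z = g z z := by
    intro z hz
    exact tendsto_nhds_unique (hz.tendsto.mono_left nhdsWithin_le_nhds)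
      (((hg z).continuousAt.tendsto.mono_left nhdsWithin_le_nhds).congr' (hDg z).symm)
  have hper' : ∀ z, ∀ l ∈ L.lattice, g (z + l) (z + l) = g z z := by
    intro z l hl
    refine tendsto_nhds_unique (f := fun x ↦ D (x + l)) (l := 𝓝[≠] z) ?_ ?_
    · have h1 : Tendsto D (𝓝[≠] (z + l)) (𝓝 (g (z + l) (z + l))) :=
        ((hg (z + l)).continuousAt.tendsto.mono_left nhdsWithin_le_nhds).congr' (hDg (z + l)).symm
      refine h1.comp ?_
      refine tendsto_nhdsWithin_iff.2 ⟨(by fun_prop : Continuous fun x ↦ x + l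
        ).continuousAt.tendsto.mono_left nhdsWithin_le_nhds, ?_⟩
      filter_upwards [self_mem_nhdsWithin] with x hx
      simpa using hx
    · refine (((hg z).continuousAt.tendsto.mono_left nhdsWithin_le_nhds).congr'
        (hDg z).symm).congr' ?_
      filter_upwards [hper l hl z] with x hx using hx.symm
  refine ⟨g 0 0, fun z hz ↦ ?_⟩
  rw [heq z hz]
  refine hdiff.apply_eq_apply_of_bounded ?_ z 0
  exact (IsZLattice.isCompact_range_of_periodic L.lattice _ hdiff.continuous
    (fun z l hl ↦ hper' z l hl)).isBounded

end

/-! ### The addition formula for zeta -/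

section

variable (L : PeriodPair)

lemma weierstrassP_analyticAt {z : ℂ} (hz : z ∉ L.lattice) : AnalyticAt ℂ L.weierstrassP z :=
  L.analyticOnNhd_weierstrassP z hz

lemma derivWeierstrassP_analyticAt {z : ℂ} (hz : z ∉ L.lattice) :
    AnalyticAt ℂ L.derivWeierstrassP z :=
  L.analyticOnNhd_derivWeierstrassP z hz

lemma exists_eq_sub_mul {f : ℂ → ℂ} {a : ℂ} (hf : AnalyticAt ℂ f a) (h0 : f a = 0) :
    ∃ g, AnalyticAt ℂ g a ∧ g a = deriv f a ∧ ∀ z, f z = (z - a) * g z := by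
  obtain ⟨p, hp⟩ := hf
  refine ⟨dslope f a, ⟨_, hp.has_fpower_series_dslope_fslope⟩, dslope_same f a, fun z ↦ ?_⟩
  rw [← smul_eq_mul, sub_smul_dslope, h0, sub_zero]

/-- The difference of the two sides of the addition formula for `zeta`, as a function of `z` for
fixed `w`. -/
def addDefect (w z : ℂ) : ℂ :=
  (L.weierstrassP z - L.weierstrassP w) * (zeta L (z + w) - zeta L z - zeta L w) -
    (L.derivWeierstrassP z - L.derivWeierstrassP w) / 2

lemma addDefect_add {w z l : ℂ} (hl : l ∈ L.lattice) (hz : z ∉ L.lattice)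
    (hzw : z + w ∉ L.lattice) : addDefect L w (z + l) = addDefect L w z := by
  have := zeta_add_sub L hzw hz hl
  rw [addDefect, addDefect, weierstrassP_add L hl, derivWeierstrassP_add L hl,
    show z + l + w = z + w + l by ring]
  linear_combination (L.weierstrassP z - L.weierstrassP w) * this

lemma addDefect_analyticAt {w z : ℂ} (hz : z ∉ L.lattice) (hzw : z + w ∉ L.lattice) :
    AnalyticAt ℂ (addDefect L w) z := by
  have h1 := weierstrassP_analyticAt L hz
  have h2 := derivWeierstrassP_analyticAt L hz
  have h3 := zeta_analyticAt L hz
  have h4 : AnalyticAt ℂ (fun z ↦ zeta L (z + w)) z :=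
    (zeta_analyticAt L hzw).comp_of_eq (f := fun z ↦ z + w) (by fun_prop) rfl
  exact ((h1.sub analyticAt_const).mul ((h4.sub h3).sub analyticAt_const)).sub
    ((h2.sub analyticAt_const).div_const)

lemma weierstrassPExcept_zero_zero : L.weierstrassPExcept 0 0 = 0 := by
  simp [PeriodPair.weierstrassPExcept]

/-- Write `℘(z) = z⁻² + E(z)`, `ζ(z) = z⁻¹ + R(z)` and `A(z) = ζ(z + w) - ζ(w) - R(z)`. The terms `z⁻³`
of `-℘(z) ζ(z)` and of `-℘'(z) / 2` cancel, and up to a function analytic at the origin the defect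
is `(A(z) + ℘(w) z) / z² - E(z) / z`, where `A(z) + ℘(w) z` has a double zero and `E(0) = 0`. -/
lemma addDefect_removable_zero {w : ℂ} (hw : w ∉ L.lattice) :
    ∃ g, AnalyticAt ℂ g 0 ∧ addDefect L w =ᶠ[𝓝[≠] 0] g := by
  have hR := analyticAt_zetaReg_zero L
  have hR' : deriv (zetaReg L) 0 = 0 := by
    rw [deriv_zetaReg L (by simp), weierstrassPExcept_zero_zero, neg_zero]
  have hP := L.analyticAt_weierstrassPExcept 0
  have hP' := L.analyticAt_derivWeierstrassPExcept 0
  have h4 : HasDerivAt (fun z ↦ zeta L (z + w)) (- L.weierstrassP w) 0 :=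
    HasDerivAt.comp_add_const 0 w (by simpa using hasDerivAt_zeta L hw)
  have h4a : AnalyticAt ℂ (fun z ↦ zeta L (z + w)) 0 :=
    (zeta_analyticAt L hw).comp_of_eq (f := fun z ↦ z + w) (by fun_prop) (by simp)
  set A : ℂ → ℂ := fun z ↦ zeta L (z + w) - zeta L w - zetaReg L z with hA
  have hAa : AnalyticAt ℂ A 0 := (h4a.sub analyticAt_const).sub hR
  have hB : HasDerivAt (fun z ↦ A z + L.weierstrassP w * z) 0 0 := by
    have h5 : HasDerivAt (zetaReg L) 0 0 := by
      simpa only [hR'] using hR.differentiableAt.hasDerivAt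
    have := ((h4.sub_const (zeta L w)).sub h5).add
      ((hasDerivAt_id (0 : ℂ)).const_mul (L.weierstrassP w))
    convert! this using 1
    simp
  obtain ⟨g1, hg1, hg10, hg1e⟩ := exists_eq_sub_mul
    (f := fun z ↦ A z + L.weierstrassP w * z) (a := 0) (hAa.add (by fun_prop))
    (by simp [hA, zetaReg_zero])
  rw [hB.deriv] at hg10
  obtain ⟨g2, hg2, -, hg2e⟩ := exists_eq_sub_mul hg1 hg10
  obtain ⟨g3, hg3, -, hg3e⟩ := exists_eq_sub_mul hP (weierstrassPExcept_zero_zero L)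
  refine ⟨fun z ↦ g2 z - g3 z + (L.weierstrassPExcept 0 z - L.weierstrassP w) * A z
    - (L.derivWeierstrassPExcept 0 z - L.derivWeierstrassP w) / 2, ?_, ?_⟩
  · exact ((hg2.sub hg3).add ((hP.sub analyticAt_const).mul hAa)).sub
      ((hP'.sub analyticAt_const).div_const)
  · filter_upwards [self_mem_nhdsWithin] with z hz
    have hz : z ≠ 0 := hz
    have e1 := L.weierstrassPExcept_add 0 z
    have e2 := L.derivWeierstrassPExcept_sub 0 z
    have e3 := hg1e z
    have e4 := hg2e z
    have e5 := hg3e z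
    simp only [ZeroMemClass.coe_zero, sub_zero] at e1 e2 e3 e4 e5
    have e6 : zeta L (z + w) = A z + zeta L w + zetaReg L z := by rw [hA]; ring
    have e7 : A z = z * (z * g2 z) - L.weierstrassP w * z := by rw [← e4, ← e3]; ring
    have e8 : zeta L z = 1 / z + zetaReg L z := rfl
    rw [addDefect, ← e1, ← e2, e6, e8, e7, e5]
    field_simp
    ring

/-- All singularities of `addDefect L w` are removable: those at lattice points reduce to `z = 0` by
periodicity, and at `z ≡ -w` the simple pole of `ζ(z + w)` meets the zero of `℘(z) - ℘(w)`. -/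
lemma addDefect_removable {w : ℂ} (hw : w ∉ L.lattice) (z₀ : ℂ) :
    ∃ g, AnalyticAt ℂ g z₀ ∧ addDefect L w =ᶠ[𝓝[≠] z₀] g := by
  by_cases hz : z₀ ∈ L.lattice
  · obtain ⟨g, hg, hge⟩ := addDefect_removable_zero L hw
    refine ⟨fun z ↦ g (z - z₀), hg.comp_of_eq (f := fun z ↦ z - z₀) (by fun_prop) (by simp), ?_⟩
    have ht : Tendsto (fun z ↦ z - z₀) (𝓝[≠] z₀) (𝓝[≠] 0) := by
      refine tendsto_nhdsWithin_iff.2 ⟨?_, ?_⟩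
      · have : ContinuousAt (fun z ↦ z - z₀) z₀ := by fun_prop
        simpa using this.tendsto.mono_left (nhdsWithin_le_nhds (s := {z₀}ᶜ))
      · filter_upwards [self_mem_nhdsWithin] with x hx
        simpa [sub_eq_zero] using hx
    filter_upwards [ht.eventually hge, eventually_affine_notMem L 1 0 z₀ one_ne_zero,
      eventually_affine_notMem L 1 w z₀ one_ne_zero] with z h1 h2 h3
    rw [← h1]
    have := addDefect_add L (w := w) (z := z) (neg_mem hz) (by simpa using h2) (by simpa using h3)
    rw [← this, sub_eq_add_neg]
  by_cases hzw : z₀ + w ∈ L.lattice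
  · have hP := weierstrassP_analyticAt L hz
    have e0 : L.weierstrassP z₀ = L.weierstrassP w := by
      have := weierstrassP_add L (z := -w) hzw
      rwa [L.weierstrassP_neg, show -w + (z₀ + w) = z₀ by ring] at this
    obtain ⟨g, hg, -, hge⟩ := exists_eq_sub_mul (f := fun z ↦ L.weierstrassP z - L.weierstrassP w)
      (hP.sub analyticAt_const) (sub_eq_zero.2 e0)
    set η := zeta L (w + (z₀ + w)) - zeta L w with hη
    refine ⟨fun z ↦ g z + (L.weierstrassP z - L.weierstrassP w) *
      (zetaReg L (z - z₀) + η - zeta L z - zeta L w) -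
      (L.derivWeierstrassP z - L.derivWeierstrassP w) / 2, ?_, ?_⟩
    · have h2 := derivWeierstrassP_analyticAt L hz
      have h3 := zeta_analyticAt L hz
      have h4 : AnalyticAt ℂ (fun z ↦ zetaReg L (z - z₀)) z₀ :=
        (analyticAt_zetaReg_zero L).comp_of_eq (f := fun z ↦ z - z₀) (by fun_prop) (by simp)
      exact (hg.add ((hP.sub analyticAt_const).mul
        (((h4.add analyticAt_const).sub h3).sub analyticAt_const))).sub
        ((h2.sub analyticAt_const).div_const)
    · filter_upwards [self_mem_nhdsWithin, eventually_affine_notMem L 1 (-z₀) z₀ one_ne_zero]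
        with z h1 h2
      rw [one_mul, ← sub_eq_add_neg] at h2
      have h3 := zeta_add_sub L h2 hw hzw
      rw [← hη, show z - z₀ + (z₀ + w) = z + w by ring] at h3
      have h7 : zeta L (z - z₀) = 1 / (z - z₀) + zetaReg L (z - z₀) := rfl
      rw [h7] at h3
      have h4 : z - z₀ ≠ 0 := sub_ne_zero.2 h1
      have h5 := hge z
      have h6 : g z = (L.weierstrassP z - L.weierstrassP w) * (1 / (z - z₀)) := by
        rw [h5]; field_simp
      rw [addDefect, h6]
      linear_combination (L.weierstrassP z - L.weierstrassP w) * h3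
  · exact ⟨_, addDefect_analyticAt L hz hzw, .rfl⟩

/-- **Addition formula** `ζ(z + w) - ζ(z) - ζ(w) = (℘'(z) - ℘'(w)) / (2 (℘(z) - ℘(w)))`, with the
denominator cleared. By Liouville's theorem the defect is constant, and it vanishes at `z = w`. -/
lemma addition_formula {w z : ℂ} (hw : w ∉ L.lattice) (h2w : w + w ∉ L.lattice)
    (hz : z ∉ L.lattice) (hzw : z + w ∉ L.lattice) :
    (L.weierstrassP z - L.weierstrassP w) * (zeta L (z + w) - zeta L z - zeta L w) =
      (L.derivWeierstrassP z - L.derivWeierstrassP w) / 2 := by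
  obtain ⟨c, hc⟩ := liouville_periodic L (addDefect_removable L hw) fun l hl z ↦ by
    filter_upwards [eventually_affine_notMem L 1 0 z one_ne_zero,
      eventually_affine_notMem L 1 w z one_ne_zero] with x h2 h3
    exact addDefect_add L hl (by simpa using h2) (by simpa using h3)
  have h1 := hc w (addDefect_analyticAt L hw h2w).continuousAt
  have h2 := hc z (addDefect_analyticAt L hz hzw).continuousAt
  rw [← h1] at h2
  simp only [addDefect, sub_self, zero_mul, zero_div] at h2
  exact sub_eq_zero.1 h2

/-- **Duplication formula**: the derivative of the addition formula in `z`, at `z = w`. -/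
lemma duplication_formula {w : ℂ} (hw : w ∉ L.lattice) (h2w : w + w ∉ L.lattice) :
    L.derivWeierstrassP w * (zeta L (w + w) - 2 * zeta L w) = deriv L.derivWeierstrassP w / 2 := by
  have e : (fun z ↦ (L.weierstrassP z - L.weierstrassP w) *
      (zeta L (z + w) - zeta L z - zeta L w)) =ᶠ[𝓝 w]
      fun z ↦ (L.derivWeierstrassP z - L.derivWeierstrassP w) / 2 := by
    filter_upwards [(isOpen_compl L).mem_nhds hw, (by fun_prop : ContinuousAt (fun z ↦ z + w) w)
      ((isOpen_compl L).mem_nhds h2w)] with z h1 h2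
    exact addition_formula L hw h2w h1 h2
  have h1 := (hasDerivAt_weierstrassP L hw).sub_const (L.weierstrassP w)
  have h2 := ((HasDerivAt.comp_add_const w w (hasDerivAt_zeta L h2w)).sub
    (hasDerivAt_zeta L hw)).sub_const (zeta L w)
  have h3 := (h1.mul h2).congr_of_eventuallyEq e.symm
  have h4 := ((derivWeierstrassP_analyticAt L hw).differentiableAt.hasDerivAt.sub_const
    (L.derivWeierstrassP w)).div_const 2
  have := h3.unique h4
  rw [← this]
  simp only [Pi.sub_apply]
  ring

end

/-! ### The differential ring generated by `℘` and `℘'` -/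

section

variable (L : PeriodPair)

lemma tendsto_sq_mul_weierstrassP :
    Tendsto (fun z ↦ z ^ 2 * L.weierstrassP z) (𝓝[≠] 0) (𝓝 1) := by
  have hP := L.analyticAt_weierstrassPExcept 0
  have h : ContinuousAt (fun z ↦ z ^ 2 * L.weierstrassPExcept 0 z + 1) 0 :=
    (((continuousAt_id.pow 2).mul hP.continuousAt).add continuousAt_const)
  have h1 : Tendsto (fun z ↦ z ^ 2 * L.weierstrassPExcept 0 z + 1) (𝓝[≠] 0) (𝓝 1) := by
    simpa using h.tendsto.mono_left (nhdsWithin_le_nhds (s := {0}ᶜ))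
  refine h1.congr' ?_
  filter_upwards [self_mem_nhdsWithin] with z hz
  have hz : z ≠ 0 := hz
  have e1 := L.weierstrassPExcept_add 0 z
  simp only [ZeroMemClass.coe_zero, sub_zero] at e1
  rw [← e1]
  field_simp
  simp

/-- `℘` has a genuine pole at the origin: it has no continuous extension there. -/
lemma not_weierstrassP_eventuallyEq_continuous {c : ℂ → ℂ} (hc : ContinuousAt c 0) :
    ¬ ∀ᶠ z in 𝓝[≠] 0, L.weierstrassP z = c z := by
  intro h
  have h1 : Tendsto (fun z ↦ z ^ 2 * c z) (𝓝[≠] 0) (𝓝 0) := by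
    have : ContinuousAt (fun z ↦ z ^ 2 * c z) 0 := (continuousAt_id.pow 2).mul hc
    simpa using this.tendsto.mono_left (nhdsWithin_le_nhds (s := {0}ᶜ))
  have h2 : Tendsto (fun z ↦ z ^ 2 * L.weierstrassP z) (𝓝[≠] 0) (𝓝 0) :=
    h1.congr' (h.mono fun z hz ↦ by simp only [hz])
  exact one_ne_zero (tendsto_nhds_unique (tendsto_sq_mul_weierstrassP L) h2)

lemma exists_derivWeierstrassP_ne_zero : ∃ z ∉ L.lattice, L.derivWeierstrassP z ≠ 0 := by
  by_contra! h
  refine not_weierstrassP_eventuallyEq_continuous L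
    (c := fun _ ↦ L.weierstrassP ((L.ω₁ + L.ω₂) / 3)) continuousAt_const ?_
  filter_upwards [eventually_notMem L 0] with z hz
  exact (isOpen_compl L).is_const_of_deriv_eq_zero (isPreconnected_compl L)
    (fun x hx ↦ (hasDerivAt_weierstrassP L hx).differentiableAt.differentiableWithinAt)
    (fun x hx ↦ by rw [L.deriv_weierstrassP]; exact h x hx) hz (basepoint_notMem L)

/-- `℘'' = 6℘² - g₂ / 2`, obtained by differentiating the Weierstrass equation and cancelling `℘'`. -/
lemma deriv_derivWeierstrassP {z : ℂ} (hz : z ∉ L.lattice) :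
    deriv L.derivWeierstrassP z = 6 * L.weierstrassP z ^ 2 - L.g₂ / 2 := by
  have key := AnalyticOnNhd.eq_zero_or_eq_zero_of_mul_eq_zero
    (U := (L.lattice : Set ℂ)ᶜ) (f := L.derivWeierstrassP)
    (g := fun z ↦ 2 * deriv L.derivWeierstrassP z - 12 * L.weierstrassP z ^ 2 + L.g₂)
    L.analyticOnNhd_derivWeierstrassP
    (fun z hz ↦ ((analyticAt_const.mul (derivWeierstrassP_analyticAt L hz).deriv).sub
      (analyticAt_const.mul ((weierstrassP_analyticAt L hz).pow 2))).add analyticAt_const)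
    ?_ (isPreconnected_compl L)
  · rcases key with h | h
    · obtain ⟨w, hw, hw'⟩ := exists_derivWeierstrassP_ne_zero L
      exact absurd (h w hw) hw'
    · linear_combination (h z hz) / 2
  · intro z hz
    have e : (fun z ↦ L.derivWeierstrassP z ^ 2) =ᶠ[𝓝 z]
        fun z ↦ 4 * L.weierstrassP z ^ 3 - L.g₂ * L.weierstrassP z - L.g₃ := by
      filter_upwards [(isOpen_compl L).mem_nhds hz] with x hx using L.derivWeierstrassP_sq x hx
    have hP := hasDerivAt_weierstrassP L hz
    have hP' := (derivWeierstrassP_analyticAt L hz).differentiableAt.hasDerivAt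
    have h1 := (hP'.pow 2).congr_of_eventuallyEq e.symm
    have h2 := (((hP.pow 3).const_mul 4).sub (hP.const_mul L.g₂)).sub_const L.g₃
    have := h1.unique h2
    norm_num at this
    linear_combination this

variable (K : IntermediateField ℚ ℂ)

/-- `p` is an element of the ring `K[℘, ℘']`. By the Weierstrass equation each element of this ring
has the form `a(℘) + b(℘) ℘'`, which is the form used here. Only values off the lattice matter. -/
def IsPoly (p : ℂ → ℂ) : Prop :=
  ∃ a b : K[X], ∀ z ∉ L.lattice,
    p z = aeval (L.weierstrassP z) a + aeval (L.weierstrassP z) b * L.derivWeierstrassP z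

/-- The Weierstrass cubic `4X³ - g₂ X - g₃` over `K`. -/
def cubic (h2 : L.g₂ ∈ K) (h3 : L.g₃ ∈ K) : K[X] :=
  4 * X ^ 3 - C ⟨L.g₂, h2⟩ * X - C ⟨L.g₃, h3⟩

variable {K}

lemma aeval_cubic (h2 : L.g₂ ∈ K) (h3 : L.g₃ ∈ K) {z : ℂ} (hz : z ∉ L.lattice) :
    aeval (L.weierstrassP z) (cubic L K h2 h3) = L.derivWeierstrassP z ^ 2 := by
  rw [L.derivWeierstrassP_sq z hz, cubic]
  simp [map_ofNat]

variable {L}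

lemma IsPoly.congr {p q : ℂ → ℂ} (hp : IsPoly L K p) (h : ∀ z ∉ L.lattice, q z = p z) :
    IsPoly L K q := by
  obtain ⟨a, b, hab⟩ := hp
  exact ⟨a, b, fun z hz ↦ (h z hz).trans (hab z hz)⟩

lemma isPoly_const {c : ℂ} (hc : c ∈ K) : IsPoly L K fun _ ↦ c :=
  ⟨C ⟨c, hc⟩, 0, fun z hz ↦ by simp⟩

lemma isPoly_weierstrassP : IsPoly L K L.weierstrassP := ⟨X, 0, fun z hz ↦ by simp⟩

lemma isPoly_derivWeierstrassP : IsPoly L K L.derivWeierstrassP := ⟨0, 1, fun z hz ↦ by simp⟩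

lemma IsPoly.add {p q : ℂ → ℂ} (hp : IsPoly L K p) (hq : IsPoly L K q) :
    IsPoly L K fun z ↦ p z + q z := by
  obtain ⟨a, b, hab⟩ := hp
  obtain ⟨c, d, hcd⟩ := hq
  refine ⟨a + c, b + d, fun z hz ↦ ?_⟩
  simp only [hab z hz, hcd z hz, map_add]; ring

lemma IsPoly.sub {p q : ℂ → ℂ} (hp : IsPoly L K p) (hq : IsPoly L K q) :
    IsPoly L K fun z ↦ p z - q z := by
  obtain ⟨a, b, hab⟩ := hp
  obtain ⟨c, d, hcd⟩ := hq
  refine ⟨a - c, b - d, fun z hz ↦ ?_⟩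
  simp only [hab z hz, hcd z hz, map_sub]; ring

lemma IsPoly.mul (h2 : L.g₂ ∈ K) (h3 : L.g₃ ∈ K) {p q : ℂ → ℂ}
    (hp : IsPoly L K p) (hq : IsPoly L K q) : IsPoly L K fun z ↦ p z * q z := by
  obtain ⟨a, b, hab⟩ := hp
  obtain ⟨c, d, hcd⟩ := hq
  refine ⟨a * c + b * d * cubic L K h2 h3, a * d + b * c, fun z hz ↦ ?_⟩
  simp only [hab z hz, hcd z hz, map_add, map_mul, aeval_cubic L h2 h3 hz]; ring

lemma hasDerivAt_aeval_weierstrassP (a : K[X]) {z : ℂ} (hz : z ∉ L.lattice) :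
    HasDerivAt (fun z ↦ aeval (L.weierstrassP z) a)
      (aeval (L.weierstrassP z) (derivative a) * L.derivWeierstrassP z) z :=
  HasDerivAt.comp z (h₂ := fun x : ℂ ↦ aeval x a) (h := L.weierstrassP)
    (Polynomial.hasDerivAt_aeval a _) (hasDerivAt_weierstrassP L hz)

/-- The derivative of `a(℘) + b(℘) ℘'`, in terms of `℘` and `℘'`. -/
lemma IsPoly.hasDerivAt_aux {p : ℂ → ℂ} {a b : K[X]}
    (hab : ∀ z ∉ L.lattice, p z = aeval (L.weierstrassP z) a +
      aeval (L.weierstrassP z) b * L.derivWeierstrassP z) {z : ℂ} (hz : z ∉ L.lattice) :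
    HasDerivAt p (aeval (L.weierstrassP z) (derivative a) * L.derivWeierstrassP z +
      (aeval (L.weierstrassP z) (derivative b) * L.derivWeierstrassP z * L.derivWeierstrassP z +
        aeval (L.weierstrassP z) b * (6 * L.weierstrassP z ^ 2 - L.g₂ / 2))) z := by
  have h1 := (derivWeierstrassP_analyticAt L hz).differentiableAt.hasDerivAt
  rw [deriv_derivWeierstrassP L hz] at h1
  have := (hasDerivAt_aeval_weierstrassP a hz).add ((hasDerivAt_aeval_weierstrassP b hz).mul h1)
  refine this.congr_of_eventuallyEq ?_
  filter_upwards [(isOpen_compl L).mem_nhds hz] with x hx using hab x hx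

lemma IsPoly.analyticAt {p : ℂ → ℂ} (hp : IsPoly L K p) {z : ℂ} (hz : z ∉ L.lattice) :
    AnalyticAt ℂ p z := by
  obtain ⟨a, b, hab⟩ := hp
  exact DifferentiableOn.analyticAt (s := (L.lattice : Set ℂ)ᶜ)
    (fun _ hx ↦ (hasDerivAt_aux hab hx).differentiableAt.differentiableWithinAt)
    ((isOpen_compl L).mem_nhds hz)

lemma IsPoly.deriv (h2 : L.g₂ ∈ K) (h3 : L.g₃ ∈ K) {p : ℂ → ℂ} (hp : IsPoly L K p) :
    IsPoly L K (deriv p) := by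
  obtain ⟨a, b, hab⟩ := hp
  refine ⟨derivative b * cubic L K h2 h3 + b * (6 * X ^ 2 - C (⟨L.g₂, h2⟩ / 2)), derivative a,
    fun z hz ↦ ?_⟩
  rw [(hasDerivAt_aux hab hz).deriv]
  simp only [map_add, map_mul, aeval_cubic L h2 h3 hz, map_sub, map_pow, aeval_X, aeval_C,
    map_ofNat, map_div₀]
  have : algebraMap K ℂ ⟨L.g₂, h2⟩ = L.g₂ := rfl
  rw [this]
  ring

lemma IsPoly.iteratedDeriv (h2 : L.g₂ ∈ K) (h3 : L.g₃ ∈ K) {p : ℂ → ℂ} (hp : IsPoly L K p)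
    (n : ℕ) : IsPoly L K (iteratedDeriv n p) := by
  induction n with
  | zero => simpa using hp
  | succ n ih => rw [iteratedDeriv_succ]; exact ih.deriv h2 h3

/-- The ring `K[℘, ℘']` of functions off the lattice has no zero divisors, by the identity theorem. -/
lemma IsPoly.eq_zero_or {p q : ℂ → ℂ} (hp : IsPoly L K p) (hq : IsPoly L K q)
    (h : ∀ z ∉ L.lattice, p z * q z = 0) :
    (∀ z ∉ L.lattice, p z = 0) ∨ (∀ z ∉ L.lattice, q z = 0) :=
  AnalyticOnNhd.eq_zero_or_eq_zero_of_mul_eq_zero (U := (L.lattice : Set ℂ)ᶜ)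
    (fun _ hz ↦ hp.analyticAt hz) (fun _ hz ↦ hq.analyticAt hz) h (isPreconnected_compl L)

/-- The norm `a² - b² (4X³ - g₂ X - g₃)` from `K(℘, ℘')` to `K(℘)` of a nonzero `p = a(℘) + b(℘) ℘'`:
a nonzero polynomial in `℘` that vanishes wherever `p` does. It equals `p(z) p(-z)`. -/
lemma IsPoly.exists_norm (h2 : L.g₂ ∈ K) (h3 : L.g₃ ∈ K) {p : ℂ → ℂ} (hp : IsPoly L K p)
    (hne : ∃ z ∉ L.lattice, p z ≠ 0) :
    ∃ N : K[X], N ≠ 0 ∧ ∀ z ∉ L.lattice, p z = 0 → aeval (L.weierstrassP z) N = 0 := by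
  have hp' := hp
  obtain ⟨a, b, hab⟩ := hp
  have hN : ∀ z ∉ L.lattice,
      aeval (L.weierstrassP z) (a ^ 2 - b ^ 2 * cubic L K h2 h3) = p z * p (-z) := by
    intro z hz
    rw [hab z hz, hab (-z) (neg_notMem L hz), L.weierstrassP_neg, L.derivWeierstrassP_neg]
    simp only [map_sub, map_mul, map_pow, aeval_cubic L h2 h3 hz]
    ring
  refine ⟨a ^ 2 - b ^ 2 * cubic L K h2 h3, fun h0 ↦ ?_, fun z hz h ↦ by rw [hN z hz, h, zero_mul]⟩
  have hneg : IsPoly L K fun z ↦ p (-z) := ⟨a, -b, fun z hz ↦ by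
    simp only [hab (-z) (neg_notMem L hz), L.weierstrassP_neg, L.derivWeierstrassP_neg]; simp⟩
  obtain ⟨w, hw, hw'⟩ := hne
  rcases hp'.eq_zero_or hneg fun z hz ↦ by rw [← hN z hz, h0, map_zero] with h | h
  · exact hw' (h w hw)
  · have := h (-w) (neg_notMem L hw)
    rw [neg_neg] at this
    exact hw' this

lemma isAlgebraic_aeval {x : ℂ} (hx : IsAlgebraic K x) (a : K[X]) : IsAlgebraic K (aeval x a) := by
  induction a using Polynomial.induction_on' with
  | add p q hp hq => rw [map_add]; exact hp.add hq
  | monomial n c => rw [aeval_monomial]; exact (isAlgebraic_algebraMap c).mul (hx.pow n)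

/-- Where `℘` takes an algebraic value, so does `℘'` by the Weierstrass equation, hence so does every
element of `K[℘, ℘']`. -/
lemma IsPoly.isAlgebraic (h2 : L.g₂ ∈ K) (h3 : L.g₃ ∈ K) {p : ℂ → ℂ} (hp : IsPoly L K p)
    {u : ℂ} (hu : u ∉ L.lattice) (hP : IsAlgebraic K (L.weierstrassP u)) :
    IsAlgebraic K (p u) := by
  have hP' : IsAlgebraic K (L.derivWeierstrassP u) := by
    refine IsAlgebraic.of_pow (n := 2) (by norm_num) ?_
    rw [← aeval_cubic L h2 h3 hu]
    exact isAlgebraic_aeval hP _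
  obtain ⟨a, b, hab⟩ := hp
  rw [hab u hu]
  exact (isAlgebraic_aeval hP a).add ((isAlgebraic_aeval hP b).mul hP')

end

/-! ### Multiplication by an integer -/

section

variable (L : PeriodPair)

/-- The points `z` none of whose multiples `z, 2z, …, Mz` is a lattice point. -/
def multAvoid (M : ℕ) : Set ℂ := {z | ∀ k : ℕ, 1 ≤ k → k ≤ M → (k : ℂ) * z ∉ L.lattice}

lemma isOpen_multAvoid (M : ℕ) : IsOpen (multAvoid L M) := by
  have : multAvoid L M = ⋂ k ∈ Finset.Icc 1 M, (fun z ↦ (k : ℂ) * z) ⁻¹' (L.lattice : Set ℂ)ᶜ := by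
    ext z
    simp [multAvoid]
  rw [this]
  exact isOpen_biInter_finset fun k _ ↦ (isOpen_compl L).preimage (by fun_prop)

lemma eventually_multAvoid (M : ℕ) (z : ℂ) : ∀ᶠ x in 𝓝[≠] z, x ∈ multAvoid L M := by
  have : ∀ᶠ x in 𝓝[≠] z, ∀ k ∈ Finset.Icc 1 M, (k : ℂ) * x ∉ L.lattice := by
    rw [Filter.eventually_all_finset]
    intro k hk
    have hk0 : (k : ℂ) ≠ 0 := Nat.cast_ne_zero.2 (by simp at hk; omega)
    simpa using eventually_affine_notMem L k 0 z hk0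
  filter_upwards [this] with x hx k h1 h2 using hx k (Finset.mem_Icc.2 ⟨h1, h2⟩)

variable {L} {K : IntermediateField ℚ ℂ} {M : ℕ}

lemma notMem_of_multAvoid (hM : 1 ≤ M) {z : ℂ} (hz : z ∈ multAvoid L M) : z ∉ L.lattice := by
  simpa using hz 1 le_rfl hM

/-- The zeros of a nonzero element of `K[℘, ℘']` are isolated. -/
lemma IsPoly.eventually_ne_zero {p : ℂ → ℂ} (hp : IsPoly L K p) (hne : ∃ z ∉ L.lattice, p z ≠ 0)
    {z : ℂ} (hz : z ∉ L.lattice) : ∀ᶠ x in 𝓝[≠] z, p x ≠ 0 := by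
  by_contra h
  obtain ⟨w, hw, hw'⟩ := hne
  exact hw' (AnalyticOnNhd.eqOn_zero_of_preconnected_of_frequently_eq_zero
    (fun x hx ↦ hp.analyticAt hx) (isPreconnected_compl L) hz
    ((Filter.not_eventually.1 h).mono fun x hx ↦ not_not.1 hx) hw)

variable (L K M)

/-- `f` is an element of the field `K(℘, ℘')`: a quotient `p / q` of elements of `K[℘, ℘']` with
`q ≠ 0`. The identity, with its denominator cleared, is only required on `multAvoid L M`, where
`z, 2z, …, Mz` are all off the poles. -/
def IsRat (f : ℂ → ℂ) : Prop :=
  ∃ p q : ℂ → ℂ, IsPoly L K p ∧ IsPoly L K q ∧ (∃ z ∉ L.lattice, q z ≠ 0) ∧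
    ∀ z ∈ multAvoid L M, q z * f z = p z

variable {L K M}

lemma IsRat.congr {f g : ℂ → ℂ} (hf : IsRat L K M f) (h : ∀ z ∈ multAvoid L M, g z = f z) :
    IsRat L K M g := by
  obtain ⟨p, q, hp, hq, hne, he⟩ := hf
  exact ⟨p, q, hp, hq, hne, fun z hz ↦ by rw [h z hz, he z hz]⟩

lemma IsPoly.isRat {f : ℂ → ℂ} (hf : IsPoly L K f) : IsRat L K M f :=
  ⟨f, fun _ ↦ 1, hf, isPoly_const (one_mem K), ⟨_, basepoint_notMem L, one_ne_zero⟩,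
    fun _ _ ↦ one_mul _⟩

lemma IsPoly.mul_ne_zero {p q : ℂ → ℂ} (hp : IsPoly L K p) (hq : IsPoly L K q)
    (hp0 : ∃ z ∉ L.lattice, p z ≠ 0) (hq0 : ∃ z ∉ L.lattice, q z ≠ 0) :
    ∃ z ∉ L.lattice, p z * q z ≠ 0 := by
  by_contra! h
  obtain ⟨a, ha, ha'⟩ := hp0
  obtain ⟨b, hb, hb'⟩ := hq0
  rcases hp.eq_zero_or hq h with h | h
  · exact ha' (h a ha)
  · exact hb' (h b hb)

section
variable (h2 : L.g₂ ∈ K) (h3 : L.g₃ ∈ K)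
include h2 h3

lemma IsRat.add {f g : ℂ → ℂ} (hf : IsRat L K M f) (hg : IsRat L K M g) :
    IsRat L K M fun z ↦ f z + g z := by
  obtain ⟨p, q, hp, hq, hne, he⟩ := hf
  obtain ⟨p', q', hp', hq', hne', he'⟩ := hg
  refine ⟨_, _, (hp.mul h2 h3 hq').add (hp'.mul h2 h3 hq), hq.mul h2 h3 hq',
    hq.mul_ne_zero hq' hne hne', fun z hz ↦ ?_⟩
  rw [← he z hz, ← he' z hz]; ring

lemma IsRat.const_mul {f : ℂ → ℂ} (hf : IsRat L K M f) {c : ℂ} (hc : c ∈ K) :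
    IsRat L K M fun z ↦ c * f z := by
  obtain ⟨p, q, hp, hq, hne, he⟩ := hf
  refine ⟨_, q, (isPoly_const hc).mul h2 h3 hp, hq, hne, fun z hz ↦ ?_⟩
  rw [← he z hz]; ring

lemma IsRat.sub {f g : ℂ → ℂ} (hf : IsRat L K M f) (hg : IsRat L K M g) :
    IsRat L K M fun z ↦ f z - g z :=
  (hf.add h2 h3 (hg.const_mul h2 h3 (neg_mem (one_mem K)))).congr fun z _ ↦ by ring

lemma IsRat.deriv (hM : 1 ≤ M) {f : ℂ → ℂ} (hf : IsRat L K M f)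
    (hd : ∀ z ∈ multAvoid L M, DifferentiableAt ℂ f z) : IsRat L K M (deriv f) := by
  obtain ⟨p, q, hp, hq, hne, he⟩ := hf
  refine ⟨_, _, (hq.mul h2 h3 (hp.deriv h2 h3)).sub ((hq.deriv h2 h3).mul h2 h3 hp),
    hq.mul h2 h3 hq, hq.mul_ne_zero hq hne hne, fun z hz ↦ ?_⟩
  have hz' := notMem_of_multAvoid hM hz
  have h1 := ((hq.analyticAt hz').differentiableAt.hasDerivAt.mul (hd z hz).hasDerivAt)
  have h4 : (fun z ↦ q z * f z) =ᶠ[𝓝 z] p := by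
    filter_upwards [(isOpen_multAvoid L M).mem_nhds hz] with x hx using he x hx
  have h5 := h4.deriv_eq
  rw [← h5, ← he z hz, show (fun z ↦ q z * f z) = q * f from rfl, h1.deriv]
  ring

/-- Division in `K(℘, ℘')`. Non-vanishing of the divisor `D` is assumed at a point of continuity,
since the zeros of the unknown denominator of `D` have to be avoided. -/
lemma IsRat.of_mul_eq (hM : 1 ≤ M) {D E N : ℂ → ℂ} (hD : IsRat L K M D) (hN : IsRat L K M N)
    (h : ∀ z ∈ multAvoid L M, D z * E z = N z)
    (hne : ∃ z ∈ multAvoid L M, ContinuousAt D z ∧ D z ≠ 0) : IsRat L K M E := by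
  obtain ⟨p, q, hp, hq, hqne, he⟩ := hD
  obtain ⟨p', q', hp', hq', hqne', he'⟩ := hN
  have hpne : ∃ z ∉ L.lattice, p z ≠ 0 := by
    obtain ⟨z, hz, hDc, hDz⟩ := hne
    have h1 := hq.eventually_ne_zero hqne (notMem_of_multAvoid hM hz)
    have h4 : ∀ᶠ x in 𝓝[≠] z, D x ≠ 0 := nhdsWithin_le_nhds (hDc.eventually_ne hDz)
    obtain ⟨x, hx1, hx2, hx3⟩ := (h1.and (h4.and (eventually_multAvoid L M z))).exists
    refine ⟨x, notMem_of_multAvoid hM hx3, ?_⟩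
    rw [← he x hx3]
    exact _root_.mul_ne_zero hx1 hx2
  refine ⟨_, _, hq.mul h2 h3 hp', hp.mul h2 h3 hq', hp.mul_ne_zero hq' hpne hqne',
    fun z hz ↦ ?_⟩
  rw [← he z hz, ← he' z hz, ← h z hz]; ring

end

variable (L) in
lemma hasDerivAt_zeta_mul {k : ℕ} {z : ℂ} (hz : (k : ℂ) * z ∉ L.lattice) :
    HasDerivAt (fun z ↦ zeta L (k * z)) (-(k * L.weierstrassP (k * z))) z := by
  have := HasDerivAt.comp z (h₂ := zeta L) (h := fun z ↦ (k : ℂ) * z) (hasDerivAt_zeta L hz)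
    ((hasDerivAt_id z).const_mul (k : ℂ))
  convert! this using 1
  ring

variable (L) in
lemma hasDerivAt_weierstrassP_mul {k : ℕ} {z : ℂ} (hz : (k : ℂ) * z ∉ L.lattice) :
    HasDerivAt (fun z ↦ L.weierstrassP (k * z)) (k * L.derivWeierstrassP (k * z)) z := by
  have := HasDerivAt.comp z (h₂ := L.weierstrassP) (h := fun z ↦ (k : ℂ) * z)
    (hasDerivAt_weierstrassP L hz) ((hasDerivAt_id z).const_mul (k : ℂ))
  convert! this using 1
  ring

variable (L) in
/-- `℘(kz) ≠ ℘(z)` as functions for `k ≥ 2`: their leading terms at the origin are `1 / (kz)²` and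
`1 / z²`. -/
lemma weierstrassP_mul_ne {k : ℕ} (hk : 2 ≤ k) :
    ¬ ∀ᶠ z in 𝓝[≠] 0, L.weierstrassP (k * z) = L.weierstrassP z := by
  intro h
  have hk0 : (k : ℂ) ≠ 0 := Nat.cast_ne_zero.2 (by omega)
  have ht : Tendsto (fun z : ℂ ↦ k * z) (𝓝[≠] 0) (𝓝[≠] 0) := by
    refine tendsto_nhdsWithin_iff.2 ⟨?_, ?_⟩
    · have : ContinuousAt (fun z : ℂ ↦ k * z) 0 := by fun_prop
      simpa using this.tendsto.mono_left (nhdsWithin_le_nhds (s := {0}ᶜ))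
    · filter_upwards [self_mem_nhdsWithin] with x hx
      simpa [hk0] using hx
  have h1 := (tendsto_sq_mul_weierstrassP L).comp ht
  have h2 : Tendsto (fun z : ℂ ↦ (k : ℂ) ^ 2 * (z ^ 2 * L.weierstrassP z)) (𝓝[≠] 0)
      (𝓝 (k ^ 2 * 1)) :=
    (tendsto_sq_mul_weierstrassP L).const_mul _
  have h3 := tendsto_nhds_unique (h1.congr' (h.mono fun z hz ↦ by
    simp only [Function.comp_apply, hz]; ring)) h2
  have h4 : (k : ℂ) ^ 2 = ((1 : ℕ) : ℂ) := by rw [← mul_one ((k : ℂ) ^ 2), ← h3]; simp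
  have h5 : k ^ 2 = 1 := by exact_mod_cast h4
  nlinarith

/-- `℘(kz) = ℘(z) - k⁻¹ h'(z)` for `h(z) = ζ(kz) - k ζ(z)`. -/
lemma IsRat.weierstrassP_mul (h2 : L.g₂ ∈ K) (h3 : L.g₃ ∈ K) {k : ℕ} (hk : 1 ≤ k) (hkM : k ≤ M)
    (h : IsRat L K M fun z ↦ zeta L (k * z) - k * zeta L z) :
    IsRat L K M fun z ↦ L.weierstrassP (k * z) := by
  have hM : 1 ≤ M := hk.trans hkM
  have hk0 : (k : ℂ) ≠ 0 := Nat.cast_ne_zero.2 (by omega)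
  have hder : ∀ z ∈ multAvoid L M, HasDerivAt (fun z ↦ zeta L (k * z) - k * zeta L z)
      (-(k * L.weierstrassP (k * z)) - k * (- L.weierstrassP z)) z := fun z hz ↦
    (hasDerivAt_zeta_mul L (hz k hk hkM)).sub
      ((hasDerivAt_zeta L (notMem_of_multAvoid hM hz)).const_mul _)
  refine (isPoly_weierstrassP.isRat.sub h2 h3 ((h.deriv h2 h3 hM fun z hz ↦
    (hder z hz).differentiableAt).const_mul h2 h3
    (inv_mem (natCast_mem K k)))).congr fun z hz ↦ ?_
  rw [(hder z hz).deriv]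
  field_simp
  ring

/-- For every `k ≥ 1` the function `ζ(kz) - k ζ(z)` is in `K(℘, ℘')`. The step from `k` to `k + 1`
adds `ζ(kz + z) - ζ(kz) - ζ(z)`, which the addition formula (the duplication formula if `k = 1`)
expresses through `℘`, `℘'` at `z` and at `kz`; the latter two are in `K(℘, ℘')` because they come
from the case `k` by differentiation. -/
lemma isRat_zeta_mul_sub (h2 : L.g₂ ∈ K) (h3 : L.g₃ ∈ K) {k : ℕ} (hk : 1 ≤ k) (hkM : k ≤ M) :
    IsRat L K M fun z ↦ zeta L (k * z) - k * zeta L z := by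
  have hM : 1 ≤ M := hk.trans hkM
  have hhalf : (1 / 2 : ℂ) ∈ K := div_mem (one_mem K) (ofNat_mem K 2)
  induction k, hk using Nat.le_induction with
  | base => exact (isPoly_const (zero_mem K)).isRat.congr fun z _ ↦ by simp
  | succ k hk ih =>
    have ih := ih (by omega)
    have hP := ih.weierstrassP_mul h2 h3 hk (by omega)
    have hP' : IsRat L K M fun z ↦ L.derivWeierstrassP (k * z) := by
      have hk0 : (k : ℂ) ≠ 0 := Nat.cast_ne_zero.2 (by omega)
      have hder : ∀ z ∈ multAvoid L M, HasDerivAt (fun z ↦ L.weierstrassP (k * z))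
          (k * L.derivWeierstrassP (k * z)) z := fun z hz ↦
        hasDerivAt_weierstrassP_mul L (hz k hk (by omega))
      refine ((hP.deriv h2 h3 hM fun z hz ↦ (hder z hz).differentiableAt).const_mul h2 h3
        (inv_mem (natCast_mem K k))).congr fun z hz ↦ ?_
      rw [(hder z hz).deriv]
      field_simp
    have h2z : ∀ z ∈ multAvoid L M, z + z ∉ L.lattice := fun z hz ↦ by
      simpa [two_mul] using hz 2 (by omega) (by omega)
    have hE : IsRat L K M fun z ↦ zeta L (k * z + z) - zeta L (k * z) - zeta L z := by
      rcases hk.eq_or_lt with rfl | hk2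
      · refine IsRat.of_mul_eq h2 h3 hM (isPoly_derivWeierstrassP.isRat)
          ((isPoly_derivWeierstrassP.deriv h2 h3).isRat.const_mul h2 h3 hhalf) (fun z hz ↦ ?_) ?_
        · have := duplication_formula L (notMem_of_multAvoid hM hz) (h2z z hz)
          rw [Nat.cast_one, one_mul]
          linear_combination this
        · obtain ⟨w, hw, hw'⟩ := exists_derivWeierstrassP_ne_zero L
          obtain ⟨x, hx1, hx2⟩ := ((isPoly_derivWeierstrassP (K := K)).eventually_ne_zero
            ⟨w, hw, hw'⟩ hw |>.and (eventually_multAvoid L M w)).exists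
          exact ⟨x, hx2, (derivWeierstrassP_analyticAt L
            (notMem_of_multAvoid hM hx2)).continuousAt, hx1⟩
      · refine IsRat.of_mul_eq h2 h3 hM (hP.sub h2 h3 isPoly_weierstrassP.isRat)
          ((hP'.sub h2 h3 isPoly_derivWeierstrassP.isRat).const_mul h2 h3 hhalf) (fun z hz ↦ ?_) ?_
        · have hkz : (k : ℂ) * z + z ∉ L.lattice := by
            simpa [add_mul] using hz (k + 1) (by omega) hkM
          have := addition_formula L (notMem_of_multAvoid hM hz) (h2z z hz)
            (hz k hk (by omega)) hkz
          linear_combination this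
        · by_contra! h
          refine weierstrassP_mul_ne L hk2 ?_
          filter_upwards [eventually_multAvoid L M 0] with z hz
          refine sub_eq_zero.1 (h z hz ?_)
          exact (hasDerivAt_weierstrassP_mul L (hz k hk (by omega))).continuousAt.sub
            (hasDerivAt_weierstrassP L (notMem_of_multAvoid hM hz)).continuousAt
    refine (ih.add h2 h3 hE).congr fun z _ ↦ ?_
    push_cast
    rw [add_mul, one_mul]
    ring

end

/-! ### Values at torsion points -/

section

variable {L : PeriodPair} {K : IntermediateField ℚ ℂ}

/-- `℘(mz)` has a pole at `u`, so the denominator `q` in `℘(mz) = p / q` vanishes at `u`, and its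
norm is a nonzero polynomial with root `℘(u)`. -/
lemma isAlgebraic_weierstrassP_torsion (h2 : L.g₂ ∈ K) (h3 : L.g₃ ∈ K) {m : ℕ} (hm : 1 ≤ m) {u : ℂ}
    (hu : u ∉ L.lattice) (hmu : (m : ℂ) * u ∈ L.lattice) :
    IsAlgebraic K (L.weierstrassP u) := by
  have hm0 : (m : ℂ) ≠ 0 := Nat.cast_ne_zero.2 (by omega)
  obtain ⟨p, q, hp, hq, hne, he⟩ :=
    (isRat_zeta_mul_sub (M := m) h2 h3 hm le_rfl).weierstrassP_mul h2 h3 hm le_rfl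
  have hqu : q u = 0 := by
    by_contra hqu
    have hc : ContinuousAt (fun z ↦ p z / q z) u :=
      (hp.analyticAt hu).continuousAt.div (hq.analyticAt hu).continuousAt hqu
    have haff : ContinuousAt (fun t : ℂ ↦ u + t / m) 0 := by fun_prop
    have hc' : ContinuousAt (fun t : ℂ ↦ p (u + t / m) / q (u + t / m)) 0 :=
      ContinuousAt.comp (g := fun z ↦ p z / q z) (f := fun t : ℂ ↦ u + t / m) (x := 0)
        (by simpa using hc) haff
    refine not_weierstrassP_eventuallyEq_continuous L hc' ?_
    have ht : Tendsto (fun t : ℂ ↦ u + t / m) (𝓝[≠] 0) (𝓝[≠] u) := by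
      refine tendsto_nhdsWithin_iff.2 ⟨?_, ?_⟩
      · simpa using haff.tendsto.mono_left (nhdsWithin_le_nhds (s := {0}ᶜ))
      · filter_upwards [self_mem_nhdsWithin] with x hx
        simpa [hm0] using hx
    have hq0 : ∀ᶠ x in 𝓝[≠] u, q x ≠ 0 :=
      nhdsWithin_le_nhds ((hq.analyticAt hu).continuousAt.eventually_ne hqu)
    filter_upwards [ht.eventually (eventually_multAvoid L m u), ht.eventually hq0] with t h1 h4
    rw [eq_div_iff h4, ← he _ h1, mul_comm]
    beta_reduce
    rw [show (m : ℂ) * (u + t / m) = t + m * u by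
      field_simp; ring, weierstrassP_add L hmu]
  obtain ⟨N, hN0, hN⟩ := hq.exists_norm h2 h3 hne
  exact ⟨N, hN0, hN u hu hqu⟩

/-- If `q h = p` and `r` is the order of vanishing of `q` at `u`, then by the Leibniz rule
`q⁽ʳ⁾(u) h(u) = p⁽ʳ⁾(u)` with `q⁽ʳ⁾(u) ≠ 0`. -/
lemma exists_iteratedDeriv_mul_eq {p q h : ℂ → ℂ} {u : ℂ} (hq : AnalyticAt ℂ q u)
    (hh : AnalyticAt ℂ h u) (hne : ¬ ∀ᶠ z in 𝓝 u, q z = 0) (he : q * h =ᶠ[𝓝 u] p) :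
    ∃ r, iteratedDeriv r q u ≠ 0 ∧ iteratedDeriv r q u * h u = iteratedDeriv r p u := by
  have hex : ∃ r, iteratedDeriv r q u ≠ 0 := by
    by_contra! hall
    refine hne (analyticOrderAt_eq_top.1 (ENat.eq_top_iff_forall_ge.2 fun n ↦ ?_))
    exact (natCast_le_analyticOrderAt_iff_iteratedDeriv_eq_zero hq).2 fun i _ ↦ hall i
  classical
  refine ⟨Nat.find hex, Nat.find_spec hex, ?_⟩
  rw [← he.iteratedDeriv_eq, iteratedDeriv_mul hq.contDiffAt hh.contDiffAt,
    Finset.sum_range_succ, Finset.sum_eq_zero]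
  · simp
  · intro i hi
    rw [not_not.1 (Nat.find_min hex (Finset.mem_range.1 hi))]
    simp

/-- The number in question is the value at `u` of `h(z) = ζ((m + 1)z) - (m + 1) ζ(z)`. The multiplier
`m + 1` is used because `(m + 1)u` is not a lattice point, so that `h` is analytic at `u`. -/
lemma isAlgebraic_zeta_torsion (h2 : L.g₂ ∈ K) (h3 : L.g₃ ∈ K) {m : ℕ} {u : ℂ}
    (hu : u ∉ L.lattice) (hmu : (m : ℂ) * u ∈ L.lattice) (hP : IsAlgebraic K (L.weierstrassP u)) :
    IsAlgebraic K (zeta L (u + m * u) - zeta L u - m * zeta L u) := by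
  have hmu' : ((m + 1 : ℕ) : ℂ) * u ∉ L.lattice := by
    have := add_notMem L hu hmu
    push_cast
    rwa [add_mul, one_mul, add_comm]
  obtain ⟨p, q, hp, hq, hne, he⟩ :=
    isRat_zeta_mul_sub (M := m + 1) h2 h3 (Nat.succ_le_succ (Nat.zero_le m)) le_rfl
  set h : ℂ → ℂ := fun z ↦ zeta L ((m + 1 : ℕ) * z) - (m + 1 : ℕ) * zeta L z with hdef
  have hh : AnalyticAt ℂ h u := by
    refine AnalyticAt.sub ?_ (analyticAt_const.mul (zeta_analyticAt L hu))
    exact AnalyticAt.fun_comp (g := zeta L) (zeta_analyticAt L hmu')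
      (analyticAt_const.mul analyticAt_id)
  have hq' := hq.analyticAt hu
  have hnear : q * h =ᶠ[𝓝 u] p := by
    have : ∀ᶠ z in 𝓝[≠] u, (q * h) z = p z := by
      filter_upwards [eventually_multAvoid L (m + 1) u] with z hz using he z hz
    exact ((hq'.mul hh).continuousAt.eventuallyEq_nhds_iff_eventuallyEq_nhdsNE
      (hp.analyticAt hu).continuousAt).1 this
  have hq0 : ¬ ∀ᶠ z in 𝓝 u, q z = 0 := fun h0 ↦ by
    obtain ⟨z, hz1, hz2⟩ := ((hq.eventually_ne_zero hne hu).and (nhdsWithin_le_nhds h0)).exists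
    exact hz1 hz2
  obtain ⟨r, hr0, hr⟩ := exists_iteratedDeriv_mul_eq hq' hh hq0 hnear
  have halg : ∀ {f : ℂ → ℂ}, IsPoly L K f → IsAlgebraic K (iteratedDeriv r f u) := fun hf ↦
    (hf.iteratedDeriv h2 h3 r).isAlgebraic h2 h3 hu hP
  have hval : zeta L (u + m * u) - zeta L u - m * zeta L u =
      iteratedDeriv r p u * (iteratedDeriv r q u)⁻¹ := by
    rw [← hr, mul_comm (iteratedDeriv r q u), mul_inv_cancel_right₀ hr0, hdef]
    push_cast
    rw [show ((m : ℂ) + 1) * u = u + m * u by ring]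
    ring
  rw [hval]
  exact (halg hp).mul (halg hq).inv

end

end TorsionValues

/-- **Torsion values.** For `ω ∈ Ω` and an integer `m ≥ 1` with `ω/m ∉ Ω`, the numbers
`℘(ω/m)` and `ζ(ω/m) − η(ω)/m` are algebraic over the field `ℚ(g₂, g₃)`. -/
theorem torsion_values_algebraic (ω₁ ω₂ : ℂ) (hΩ : IsLatticeBasis ω₁ ω₂)
    (ω : ℂ) (hω : ω ∈ LatticePts ω₁ ω₂) (m : ℕ) (hm : 1 ≤ m)
    (hωm : ω / m ∉ LatticePts ω₁ ω₂) :
    IsAlgebraic (IntermediateField.adjoin ℚ ({g2 ω₁ ω₂, g3 ω₁ ω₂} : Set ℂ))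
        (wP ω₁ ω₂ (ω / m)) ∧
      IsAlgebraic (IntermediateField.adjoin ℚ ({g2 ω₁ ω₂, g3 ω₁ ω₂} : Set ℂ))
        (wZeta ω₁ ω₂ (ω / m) - wEta ω₁ ω₂ ω / m) := by
  set L : PeriodPair := ⟨ω₁, ω₂, hΩ⟩ with hL
  set K := IntermediateField.adjoin ℚ ({g2 ω₁ ω₂, g3 ω₁ ω₂} : Set ℂ)
  have h2 : L.g₂ ∈ K := TorsionValues.g2_eq L ▸
    IntermediateField.subset_adjoin ℚ _ (Set.mem_insert _ _)
  have h3 : L.g₃ ∈ K := TorsionValues.g3_eq L ▸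
    IntermediateField.subset_adjoin ℚ _ (Set.mem_insert_of_mem _ rfl)
  have hm0 : (m : ℂ) ≠ 0 := Nat.cast_ne_zero.2 (by omega)
  have hωL : ω ∈ L.lattice := (TorsionValues.mem_latticePts_iff L).1 hω
  have hu : ω / m ∉ L.lattice := fun h ↦ hωm ((TorsionValues.mem_latticePts_iff L).2 h)
  have hmu : (m : ℂ) * (ω / m) = ω := by field_simp
  have hP := TorsionValues.isAlgebraic_weierstrassP_torsion h2 h3 hm hu (hmu.symm ▸ hωL)
  have hZ := TorsionValues.isAlgebraic_zeta_torsion h2 h3 hu (hmu.symm ▸ hωL) hP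
  rw [hmu, ← TorsionValues.wEta_eq L hωL hu, ← TorsionValues.wZeta_eq L hu] at hZ
  refine ⟨(TorsionValues.wP_eq L hu).symm ▸ hP, ?_⟩
  have hinv : IsAlgebraic K (-(m : ℂ)⁻¹) := (isAlgebraic_algebraMap (m : K)).inv.neg
  convert! hinv.mul hZ using 1
  have e1 : L.ω₁ = ω₁ := rfl
  have e2 : L.ω₂ = ω₂ := rfl
  rw [e1, e2]
  field_simp
  ring
end
end

section
/- Let Ω be a lattice in ℂ with Weierstrass functions ℘, ζ and invariants g₂, g₃, and let α be a complex number. If g₃ = 0 and α⁴ = 1, then ℘(αz) = α²℘(z) and ζ(αz) = α³ζ(z) for all z ∈ ℂ ∖ Ω. If g₂ = 0 and α⁶ = 1, then ℘(αz) = α⁴℘(z) and ζ(αz) = α⁵ζ(z) for all z ∈ ℂ ∖ Ω. -/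
/-!
Multiplication by `α` scales the Eisenstein sums by `G_n(αΩ) = α⁻ⁿ G_n(Ω)`. Hence, if `g₃ = 0` and
`α⁴ = 1`, or `g₂ = 0` and `α⁶ = 1`, the lattices `Ω` and `αΩ` have the same invariants.

The invariants determine the lattice (`lattice_eq_of_invariants`). Indeed, if the `℘`-functions `℘` and `ψ`
of two lattices satisfy the
same equation `y'² = 4y³ - g₂y - g₃`, then `u = ℘ - ψ` is holomorphic at `0` and satisfies
`u' (℘' + ψ') = u (4(℘² + ℘ψ + ψ²) - g₂)`. If `u` had a zero of finite order `n ≥ 0` at `0`,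
comparing leading coefficients would give `-4n = 12`, which is absurd; so `u = 0` near `0`. By
the identity theorem `℘ = ψ` off the poles, and the lattices, being the sets of poles, agree.

Hence `αΩ = Ω`. Reindexing the product for `σ` gives `σ(αz) = ασ(z)`, and
differentiating gives `ζ(αz) = α⁻¹ζ(z)` and `℘(αz) = α⁻²℘(z)`.
-/

open Complex

noncomputable section

open Filter Topology PeriodPair

/-! ### The invariants determine the lattice -/

/-- Two Weierstrass functions with the same invariants have the same regular part at `0`: the first
order differential equation excludes every finite order of vanishing of their difference. -/
lemma weierstrassPExcept_eventuallyEq (L M : PeriodPair) (h2 : L.g₂ = M.g₂) (h3 : L.g₃ = M.g₃) :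
    ∀ᶠ z in 𝓝 (0 : ℂ), L.weierstrassPExcept 0 z = M.weierstrassPExcept 0 z := by
  set P := L.weierstrassPExcept 0 with hP
  set Q := M.weierstrassPExcept 0 with hQ
  set P' := L.derivWeierstrassPExcept 0 with hP'
  set Q' := M.derivWeierstrassPExcept 0 with hQ'
  have aP : AnalyticAt ℂ P 0 := L.analyticAt_weierstrassPExcept 0
  have aQ : AnalyticAt ℂ Q 0 := M.analyticAt_weierstrassPExcept 0
  have aP' : AnalyticAt ℂ P' 0 := L.analyticAt_derivWeierstrassPExcept 0
  have aQ' : AnalyticAt ℂ Q' 0 := M.analyticAt_derivWeierstrassPExcept 0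
  have au : AnalyticAt ℂ (fun z => P z - Q z) 0 := aP.fun_sub aQ
  rcases au.eventually_eq_zero_or_eventually_ne_zero with h | hne
  · filter_upwards [h] with z hz using sub_eq_zero.mp hz
  exfalso
  obtain ⟨n, g, ag, hg0, hug⟩ := au.exists_eventuallyEq_pow_smul_nonzero_iff.mpr
    (fun h => by
      obtain ⟨z, hz1, hz2⟩ := (hne.and (h.filter_mono nhdsWithin_le_nhds)).exists
      exact hz1 hz2)
  simp only [sub_zero, smul_eq_mul] at hug
  have oL : ∀ᶠ z in 𝓝 (0 : ℂ), z ∈ ((L.lattice : Set ℂ) \ {0})ᶜ :=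
    L.isOpen_compl_lattice_sdiff.mem_nhds (by simp)
  have oM : ∀ᶠ z in 𝓝 (0 : ℂ), z ∈ ((M.lattice : Set ℂ) \ {0})ᶜ :=
    M.isOpen_compl_lattice_sdiff.mem_nhds (by simp)
  have dg : ∀ᶠ z in 𝓝 (0 : ℂ), DifferentiableAt ℂ g z :=
    ag.eventually_analyticAt.mono fun z hz => hz.differentiableAt
  -- The difference of the two differential equations, multiplied by `z ^ (4 - n)`.
  have key : ∀ᶠ z in 𝓝[≠] (0 : ℂ),
      (n * g z + z * deriv g z) * (z ^ 3 * (P' z + Q' z) - 4) =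
      g z * (4 * ((1 + z ^ 2 * P z) ^ 2 + (1 + z ^ 2 * P z) * (1 + z ^ 2 * Q z)
        + (1 + z ^ 2 * Q z) ^ 2) - L.g₂ * z ^ 4) := by
    have hug' := hug.eventually_nhds
    filter_upwards [nhdsWithin_le_nhds hug', nhdsWithin_le_nhds oL, nhdsWithin_le_nhds oM,
      nhdsWithin_le_nhds dg, self_mem_nhdsWithin] with z hu hL hM hd hz
    have hz0 : z ≠ 0 := hz
    have hzL : z ∉ L.lattice := fun h => hL ⟨h, hz⟩
    have hzM : z ∉ M.lattice := fun h => hM ⟨h, hz⟩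
    have eL := L.derivWeierstrassP_sq z hzL
    have eM := M.derivWeierstrassP_sq z hzM
    have e1 : L.weierstrassP z = P z + 1 / z ^ 2 := by
      have := L.weierstrassPExcept_add 0 z
      simp only [ZeroMemClass.coe_zero, sub_zero] at this
      rw [← this]; simp [hP]
    have e2 : M.weierstrassP z = Q z + 1 / z ^ 2 := by
      have := M.weierstrassPExcept_add 0 z
      simp only [ZeroMemClass.coe_zero, sub_zero] at this
      rw [← this]; simp [hQ]
    have e3 : L.derivWeierstrassP z = P' z - 2 / z ^ 3 := by
      have := L.derivWeierstrassPExcept_sub 0 z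
      simp only [ZeroMemClass.coe_zero, sub_zero] at this
      rw [← this]
    have e4 : M.derivWeierstrassP z = Q' z - 2 / z ^ 3 := by
      have := M.derivWeierstrassPExcept_sub 0 z
      simp only [ZeroMemClass.coe_zero, sub_zero] at this
      rw [← this]
    have dP : HasDerivAt P (P' z) z := by
      rw [hP', ← L.eqOn_deriv_weierstrassPExcept_derivWeierstrassPExcept 0 hL]
      exact (L.analyticOnNhd_weierstrassPExcept 0 z hL).differentiableAt.hasDerivAt
    have dQ : HasDerivAt Q (Q' z) z := by
      rw [hQ', ← M.eqOn_deriv_weierstrassPExcept_derivWeierstrassPExcept 0 hM]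
      exact (M.analyticOnNhd_weierstrassPExcept 0 z hM).differentiableAt.hasDerivAt
    have du := (dP.fun_sub dQ).unique
      (((hasDerivAt_pow n z).fun_mul hd.hasDerivAt).congr_of_eventuallyEq hu)
    have hu0 : P z - Q z = z ^ n * g z := hu.self_of_nhds
    have hzn : z * (P' z - Q' z) = z ^ n * (n * g z + z * deriv g z) := by
      rw [du]
      rcases n with _ | n
      · simp
      · simp only [Nat.add_sub_cancel]; ring
    rw [e1, e3] at eL
    rw [e2, e4, ← h2, ← h3] at eM
    have hdiff : (P' z - Q' z) * (P' z + Q' z - 4 / z ^ 3) = (P z - Q z) *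
        (4 * ((P z + 1 / z ^ 2) ^ 2 + (P z + 1 / z ^ 2) * (Q z + 1 / z ^ 2)
          + (Q z + 1 / z ^ 2) ^ 2) - L.g₂) := by
      linear_combination eL - eM
    apply mul_left_cancel₀ (pow_ne_zero n hz0)
    rw [← mul_assoc, ← hzn, ← mul_assoc, ← hu0]
    have hA : z ^ 3 * (P' z + Q' z) - 4 = z ^ 3 * (P' z + Q' z - 4 / z ^ 3) := by
      field_simp
    have hB : 4 * ((1 + z ^ 2 * P z) ^ 2 + (1 + z ^ 2 * P z) * (1 + z ^ 2 * Q z)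
        + (1 + z ^ 2 * Q z) ^ 2) - L.g₂ * z ^ 4 = z ^ 4 *
        (4 * ((P z + 1 / z ^ 2) ^ 2 + (P z + 1 / z ^ 2) * (Q z + 1 / z ^ 2)
          + (Q z + 1 / z ^ 2) ^ 2) - L.g₂) := by
      field_simp
      ring
    rw [hA, hB]
    linear_combination z ^ 4 * hdiff
  have cP := aP.continuousAt
  have cQ := aQ.continuousAt
  have cP' := aP'.continuousAt
  have cQ' := aQ'.continuousAt
  have cg := ag.continuousAt
  have cg' := ag.deriv.continuousAt
  have h0 := (ContinuousAt.eventuallyEq_nhds_iff_eventuallyEq_nhdsNE (by fun_prop)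
    (by fun_prop)).mp key |>.self_of_nhds
  norm_num at h0
  have h12 : ((n : ℂ) + 3) * g 0 = 0 := by linear_combination -h0 / 4
  rcases mul_eq_zero.mp h12 with h | h
  · norm_cast at h
  · exact hg0 h

lemma countable_lattice (L : PeriodPair) : (L.lattice : Set ℂ).Countable := by
  refine (Set.countable_range fun p : ℤ × ℤ => (p.1 * L.ω₁ + p.2 * L.ω₂ : ℂ)).mono fun z hz => ?_
  obtain ⟨m, n, h⟩ := mem_lattice.mp hz
  exact ⟨(m, n), h⟩

/-- Lattices with the same invariants have the same Weierstrass function off their points. -/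
lemma weierstrassP_eqOn (L M : PeriodPair) (h2 : L.g₂ = M.g₂) (h3 : L.g₃ = M.g₃) :
    Set.EqOn L.weierstrassP M.weierstrassP ((L.lattice : Set ℂ) ∪ M.lattice)ᶜ := by
  have hc : ((L.lattice : Set ℂ) ∪ M.lattice).Countable :=
    (countable_lattice L).union (countable_lattice M)
  have hpc := (hc.isPathConnected_compl_of_one_lt_rank (E := ℂ)
    (by simp [Complex.rank_real_complex])).isConnected.isPreconnected
  have hev : ∀ᶠ z in 𝓝 (0 : ℂ), L.weierstrassP z = M.weierstrassP z := by
    filter_upwards [weierstrassPExcept_eventuallyEq L M h2 h3] with z hz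
    have e1 := L.weierstrassPExcept_add 0 z
    have e2 := M.weierstrassPExcept_add 0 z
    simp only [ZeroMemClass.coe_zero] at e1 e2
    rw [← e1, ← e2, hz]
  obtain ⟨z, hz, hzU⟩ :=
    (hc.dense_compl ℝ).inter_nhds_nonempty hev.eventually_nhds
  exact (L.analyticOnNhd_weierstrassP.mono (by simp)).eqOn_of_preconnected_of_eventuallyEq
    (M.analyticOnNhd_weierstrassP.mono (by simp)) hpc hz hzU

lemma lattice_le_of_invariants (L M : PeriodPair) (h2 : L.g₂ = M.g₂) (h3 : L.g₃ = M.g₃) :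
    L.lattice ≤ M.lattice := by
  intro w hw
  by_contra hwM
  have hL : ∀ᶠ z in 𝓝 w, z ∈ ((L.lattice : Set ℂ) \ {w})ᶜ :=
    L.isOpen_compl_lattice_sdiff.mem_nhds (by simp)
  have hM : ∀ᶠ z in 𝓝 w, z ∈ (M.lattice : Set ℂ)ᶜ :=
    M.isClosed_lattice.isOpen_compl.mem_nhds hwM
  have he : L.weierstrassP =ᶠ[𝓝[≠] w] M.weierstrassP := by
    filter_upwards [nhdsWithin_le_nhds hL, nhdsWithin_le_nhds hM, self_mem_nhdsWithin]
      with z h1 h2' h3'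
    exact weierstrassP_eqOn L M h2 h3 fun h => h.elim (fun h => h1 ⟨h, h3'⟩) h2'
  have ho := L.order_weierstrassP w hw
  rw [meromorphicOrderAt_congr he] at ho
  have := (M.analyticOnNhd_weierstrassP w hwM).meromorphicOrderAt_nonneg
  rw [ho] at this
  exact absurd this (by decide)

/-- The invariants `g₂` and `g₃` determine the lattice. -/
lemma lattice_eq_of_invariants (L M : PeriodPair) (h2 : L.g₂ = M.g₂) (h3 : L.g₃ = M.g₃) :
    L.lattice = M.lattice :=
  le_antisymm (lattice_le_of_invariants L M h2 h3)
    (lattice_le_of_invariants M L h2.symm h3.symm)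

/-! ### Scaling the lattice -/

/-- The basis `(αω₁, αω₂)` of the lattice `αΩ`. -/
def scalePair (L : PeriodPair) (α : ℂ) (hα : α ≠ 0) : PeriodPair where
  ω₁ := α * L.ω₁
  ω₂ := α * L.ω₂
  indep := by
    rw [LinearIndependent.pair_iff]
    intro s t h
    refine LinearIndependent.pair_iff.mp L.indep s t (mul_left_cancel₀ hα ?_)
    simp only [Complex.real_smul] at h ⊢
    linear_combination h

lemma mul_mem_scalePair (L : PeriodPair) (α : ℂ) (hα : α ≠ 0) (z : ℂ) :
    α * z ∈ (scalePair L α hα).lattice ↔ z ∈ L.lattice := by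
  simp only [mem_lattice, scalePair]
  refine exists_congr fun m => exists_congr fun n => ?_
  rw [← mul_right_inj' hα (b := m * L.ω₁ + n * L.ω₂) (c := z)]
  ring_nf

lemma G_scalePair (L : PeriodPair) (α : ℂ) (hα : α ≠ 0) (n : ℕ) :
    (scalePair L α hα).G n = (α ^ n)⁻¹ * L.G n := by
  rw [G, G, ← tsum_mul_left, ← ((Equiv.mulLeft₀ α hα).subtypeEquiv
    fun z => (mul_mem_scalePair L α hα z).symm).tsum_eq]
  refine tsum_congr fun l => ?_
  change ((α * (l : ℂ)) ^ n)⁻¹ = _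
  rw [mul_pow, mul_inv]

/-- The Eisenstein sum over all lattice points is the one over nonzero points, since `0⁻¹ = 0`. -/
lemma G_eq_tsum (L : PeriodPair) {n : ℕ} (hn : n ≠ 0) :
    L.G n = ∑' w : LatticePts' L.ω₁ L.ω₂, ((w : ℂ) ^ n)⁻¹ := by
  rw [G, tsum_subtype (LatticePts' L.ω₁ L.ω₂) fun w : ℂ => (w ^ n)⁻¹]
  refine (tsum_subtype (L.lattice : Set ℂ) fun w : ℂ => (w ^ n)⁻¹).trans (tsum_congr fun z => ?_)
  by_cases hz : z = 0
  · subst hz; simp [Set.indicator, hn]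
  · have : z ∈ LatticePts' L.ω₁ L.ω₂ ↔ z ∈ (L.lattice : Set ℂ) := by
      simp [LatticePts', LatticePts, mem_lattice, hz, eq_comm]
    by_cases h : z ∈ (L.lattice : Set ℂ)
    · rw [Set.indicator_of_mem h, Set.indicator_of_mem (this.mpr h)]
    · rw [Set.indicator_of_notMem h, Set.indicator_of_notMem (mt this.mp h)]

/-! ### Complex multiplication -/

/-- Equivariance of `ζ` and `℘` under a complex multiplication `αΩ = Ω`. -/
lemma wP_wZeta_mul (ω₁ ω₂ α : ℂ) (hα : α ≠ 0)
    (h : ∀ z, α * z ∈ LatticePts ω₁ ω₂ ↔ z ∈ LatticePts ω₁ ω₂) (z : ℂ) :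
    wP ω₁ ω₂ (α * z) = (α ^ 2)⁻¹ * wP ω₁ ω₂ z ∧
      wZeta ω₁ ω₂ (α * z) = α⁻¹ * wZeta ω₁ ω₂ z := by
  have hσ : ∀ z, wSigma ω₁ ω₂ (α * z) = α * wSigma ω₁ ω₂ z := by
    intro z
    rw [wSigma, wSigma, mul_assoc]
    congr 2
    rw [← ((Equiv.mulLeft₀ α hα).subtypeEquiv (p := (· ∈ LatticePts' ω₁ ω₂))
      (q := (· ∈ LatticePts' ω₁ ω₂)) fun z => by simp [LatticePts', h, hα]).tprod_eq]
    refine tprod_congr fun w => ?_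
    have hw : (w : ℂ) ≠ 0 := w.2.2
    have e1 : α * z / (α * w) = z / w := mul_div_mul_left _ _ hα
    have e2 : (α * z) ^ 2 / (2 * (α * w) ^ 2) = z ^ 2 / (2 * (w : ℂ) ^ 2) := by
      field_simp
    change (1 - α * z / (α * w)) *
      Complex.exp (α * z / (α * w) + (α * z) ^ 2 / (2 * (α * w) ^ 2)) = _
    rw [e1, e2]
  have hσ' : ∀ z, deriv (wSigma ω₁ ω₂) (α * z) = deriv (wSigma ω₁ ω₂) z := by
    intro z
    have h1 := deriv_comp_mul_left α (wSigma ω₁ ω₂) z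
    rw [funext hσ, deriv_const_mul_field, smul_eq_mul] at h1
    exact (mul_left_cancel₀ hα h1).symm
  have hζ : ∀ z, wZeta ω₁ ω₂ (α * z) = α⁻¹ * wZeta ω₁ ω₂ z := by
    intro z
    rw [wZeta, wZeta, hσ, hσ', div_mul_eq_div_div_swap, div_eq_inv_mul]
  refine ⟨?_, hζ z⟩
  have h1 := deriv_comp_mul_left α (wZeta ω₁ ω₂) z
  rw [funext hζ, deriv_const_mul_field, smul_eq_mul] at h1
  rw [wP, wP]
  field_simp
  field_simp at h1
  linear_combination h1

/-- If `Ω` and `αΩ` have the same invariants, then `αΩ = Ω`. -/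
lemma mul_mem_of_invariants (L : PeriodPair) (α : ℂ) (hα : α ≠ 0)
    (h4 : L.G 4 = (α ^ 4)⁻¹ * L.G 4) (h6 : L.G 6 = (α ^ 6)⁻¹ * L.G 6) (z : ℂ) :
    α * z ∈ LatticePts L.ω₁ L.ω₂ ↔ z ∈ LatticePts L.ω₁ L.ω₂ := by
  have h := lattice_eq_of_invariants L (scalePair L α hα)
    (by rw [g₂, g₂, G_scalePair, ← h4]) (by rw [g₃, g₃, G_scalePair, ← h6])
  have hm : ∀ w, w ∈ LatticePts L.ω₁ L.ω₂ ↔ w ∈ L.lattice := fun w => by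
    simp [LatticePts, mem_lattice, eq_comm]
  rw [hm, hm, ← mul_mem_scalePair L α hα z, ← h]

/-- **Special automorphisms.** If `g₃ = 0` and `α⁴ = 1` then `℘(αz) = α²℘(z)` and
`ζ(αz) = α³ζ(z)` for all `z ∈ ℂ ∖ Ω`; if `g₂ = 0` and `α⁶ = 1` then `℘(αz) = α⁴℘(z)` and
`ζ(αz) = α⁵ζ(z)` for all `z ∈ ℂ ∖ Ω`. -/
theorem special_automorphisms (ω₁ ω₂ : ℂ) (hΩ : IsLatticeBasis ω₁ ω₂) (α : ℂ) :
    (g3 ω₁ ω₂ = 0 → α ^ 4 = 1 → ∀ z : ℂ, z ∉ LatticePts ω₁ ω₂ →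
      wP ω₁ ω₂ (α * z) = α ^ 2 * wP ω₁ ω₂ z ∧
      wZeta ω₁ ω₂ (α * z) = α ^ 3 * wZeta ω₁ ω₂ z) ∧
    (g2 ω₁ ω₂ = 0 → α ^ 6 = 1 → ∀ z : ℂ, z ∉ LatticePts ω₁ ω₂ →
      wP ω₁ ω₂ (α * z) = α ^ 4 * wP ω₁ ω₂ z ∧
      wZeta ω₁ ω₂ (α * z) = α ^ 5 * wZeta ω₁ ω₂ z) := by
  constructor
  · intro h3 hα z _
    have h0 : α ≠ 0 := by rintro rfl; norm_num at hα
    have hG : PeriodPair.G ⟨ω₁, ω₂, hΩ⟩ 6 = 0 := by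
      rw [G_eq_tsum _ (by norm_num)]
      simpa [g3] using h3
    obtain ⟨hp, hζ⟩ := wP_wZeta_mul ω₁ ω₂ α h0
      (mul_mem_of_invariants ⟨ω₁, ω₂, hΩ⟩ α h0 (by rw [hα]; simp) (by rw [hG]; simp)) z
    rw [hp, hζ, inv_eq_of_mul_eq_one_right (a := α ^ 2) (b := α ^ 2), inv_eq_of_mul_eq_one_right (a := α) (b := α ^ 3)]
    · exact ⟨rfl, rfl⟩
    · linear_combination hα
    · linear_combination hα
  · intro h2 hα z _
    have h0 : α ≠ 0 := by rintro rfl; norm_num at hα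
    have hG : PeriodPair.G ⟨ω₁, ω₂, hΩ⟩ 4 = 0 := by
      rw [G_eq_tsum _ (by norm_num)]
      simpa [g2] using h2
    obtain ⟨hp, hζ⟩ := wP_wZeta_mul ω₁ ω₂ α h0
      (mul_mem_of_invariants ⟨ω₁, ω₂, hΩ⟩ α h0 (by rw [hG]; simp) (by rw [hα]; simp)) z
    rw [hp, hζ, inv_eq_of_mul_eq_one_right (a := α ^ 2) (b := α ^ 4), inv_eq_of_mul_eq_one_right (a := α) (b := α ^ 5)]
    · exact ⟨rfl, rfl⟩
    · linear_combination hα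
    · linear_combination hα
end
end
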